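/- Let q ≥ 2 be an integer and let f : ℕ → ℝ be a nonnegative function such that for all positive integers k₁ ≥ k₂ ≥ ⋯ ≥ k_q with k_q ≥ k₁/2 one has r(k₁, k₂, …, k_q) ≤ f(k₁) · q^{k₁ + k₂ + ⋯ + k_q}. Then there exists a constant c > 0 such that for all positive integers t, the q-colour on-line Ramsey number of K_t satisfies r̃_q(t) ≤ f(⌈ct⌉) · q^{qt}. -/

import Mathlib

/-- A monochromatic clique of size `k` in colour `i` for an edge-colouring `c` of `K_n`. -/
def monoClique {n q : ℕ} (c : Sym2 (Fin n) → Fin q) (i : Fin q) (k : ℕ) : Prop :=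
  ∃ A : Finset (Fin n), A.card = k ∧ ∀ u ∈ A, ∀ v ∈ A, u ≠ v → c s(u, v) = i

/-- The `q`-colour Ramsey number `r(k 0, …, k (q-1))`. -/
noncomputable def ramseyQ {q : ℕ} (k : Fin q → ℕ) : ℕ :=
  sInf {n : ℕ | ∀ c : Sym2 (Fin n) → Fin q, ∃ i : Fin q, monoClique c i (k i)}

/-- The two-colour Ramsey number `r(s, t)`. -/
noncomputable def ramsey2 (s t : ℕ) : ℕ := ramseyQ ![s, t]

/-- A history in the on-line Ramsey game: the previously presented edges with their colours. -/
abbrev History (q : ℕ) := List (Sym2 ℕ × Fin q)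

/-- A Builder strategy is valid if it always presents a genuine new edge. -/
def validBuilder {q : ℕ} (B : History q → Sym2 ℕ) : Prop :=
  ∀ h : History q, ¬ (B h).IsDiag ∧ B h ∉ h.map Prod.fst

/-- The play determined by a Builder strategy `B` and a Painter strategy `P`:
`play B P n` is the history after `n` rounds. -/
def play {q : ℕ} (B : History q → Sym2 ℕ) (P : History q → Sym2 ℕ → Fin q) : ℕ → History q
  | 0 => []
  | n + 1 =>
      let h := play B P n
      h ++ [(B h, P h (B h))]

/-- The graph formed by the edges of colour `i` in a history. -/
def colourGraph {q : ℕ} (h : History q) (i : Fin q) : SimpleGraph ℕ :=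
  SimpleGraph.fromEdgeSet {e | (e, i) ∈ h}

/-- `H` contains a copy of `G` as a subgraph. -/
def containsCopy {V : Type*} (G : SimpleGraph V) (H : SimpleGraph ℕ) : Prop :=
  ∃ f : V → ℕ, Function.Injective f ∧ ∀ u v, G.Adj u v → H.Adj (f u) (f v)

/-- The `q`-colour on-line Ramsey number of `G`: the least `N` such that Builder has a
valid strategy forcing, against every Painter strategy, a monochromatic copy of `G`
within at most `N` rounds. -/
noncomputable def onlineRamsey {V : Type*} (q : ℕ) (G : SimpleGraph V) : ℕ :=
  sInf {N : ℕ | ∃ B : History q → Sym2 ℕ, validBuilder B ∧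
    ∀ P : History q → Sym2 ℕ → Fin q,
      ∃ n ≤ N, ∃ i : Fin q, containsCopy G (colourGraph (play B P n) i)}

/-!
The diagonal case of the hypothesis gives `1 ≤ f m * q ^ (q * m)`, because `r(m, …, m) ≥ 1`. So it
suffices to find `c > 0` with `r̃_q(t) ≤ q ^ (q * t - q * ⌈c * t⌉)`, an exponential improvement on
the trivial bound.

Builder achieves this with stars: joining a vertex to all remaining ones and keeping the most
popular colour neighbourhood costs a factor `q` and lowers the required clique size in that colour
by one. Once the sum of the required sizes has halved, say to `m`, Builder presents all edges inside
the remaining set. That set needs only as many vertices as an off-diagonal Ramsey number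
`r(k₁, …, k_q)` with `∑ kᵢ = m`, and stars and final clique both stay below `q ^ (q * t)` by an
exponential factor as soon as `r(k₁, …, k_q) ≤ q ^ ((1 - δ) * m)` for large `m`.

For nearly diagonal `k` this is the book algorithm of Balister, Bollobás, Campos, Griffiths, Hurley,
Morris, Sahasrabudhe and Tiba. In every reservoir `X` some vertex has, for a good proportion of the
other vertices, neighbourhoods in all colours that overlap with theirs hardly less than random ones
would, and in one colour `l` by a further amount `lam`, the proportion being at least
`exp (-O(√(lam + 1)))`. If `lam` is small, the vertex joins the spine of the book in its majority
colour; if `lam` is large, the density between `X` and the pages in colour `l` increases. The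
resulting monochromatic book leaves an unbalanced problem in its pages. Unbalanced `k` are covered
by weighting the Erdős–Szekeres recursion, and passing to colour neighbourhoods that are larger than
average yields either the minimum degree required for a book or an immediate gain.
-/

namespace OnlineRamsey

open Finset Filter Topology

section TestFunction

open scoped Matrix

/-- The entire function `∑ xᵐ / (2 * m)!`, written in closed form on each half-line. Its Taylor
coefficients are nonnegative, so it preserves positive semidefiniteness entrywise, while it is
bounded on the negative half-line. -/
noncomputable def coshSqrt (x : ℝ) : ℝ := if 0 ≤ x then Real.cosh √x else Real.cos √(-x)

lemma hasSum_coshSqrt (x : ℝ) :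
    HasSum (fun m : ℕ => x ^ m / ((2 * m).factorial : ℝ)) (coshSqrt x) := by
  unfold coshSqrt
  split_ifs with h
  · refine (Real.hasSum_cosh √x).congr_fun fun m => ?_
    rw [pow_mul, Real.sq_sqrt h]
  · refine (Real.hasSum_cos √(-x)).congr_fun fun m => ?_
    rw [pow_mul, Real.sq_sqrt (by linarith), ← mul_pow]
    ring_nf

lemma neg_one_le_coshSqrt (x : ℝ) : -1 ≤ coshSqrt x := by
  unfold coshSqrt
  split_ifs with h
  · linarith [Real.one_le_cosh √x]
  · exact Real.neg_one_le_cos _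

lemma coshSqrt_le_one {x : ℝ} (hx : x < 0) : coshSqrt x ≤ 1 := by
  rw [coshSqrt, if_neg hx.not_ge]
  exact Real.cos_le_one _

lemma coshSqrt_le_exp_sqrt (x : ℝ) : coshSqrt x ≤ Real.exp √x := by
  rcases lt_or_ge x 0 with h | h
  · exact (coshSqrt_le_one h).trans (Real.one_le_exp (Real.sqrt_nonneg x))
  · rw [coshSqrt, if_pos h, Real.cosh_eq]
    have : Real.exp (-√x) ≤ Real.exp √x := Real.exp_le_exp.2 (neg_le_self (Real.sqrt_nonneg x))
    linarith

lemma le_two_add_coshSqrt (x : ℝ) : x ≤ 2 + coshSqrt x := by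
  rcases lt_or_ge x 0 with h | h
  · linarith [neg_one_le_coshSqrt x]
  · have := sum_le_hasSum (range 3) (fun m _ => by positivity) (hasSum_coshSqrt x)
    simp only [sum_range_succ, range_zero, sum_empty, Nat.factorial] at this
    norm_num at this
    nlinarith [sq_nonneg (x - 6)]

variable {ι α : Type*}

lemma posSemidef_of_tendsto {M : ℕ → Matrix α α ℝ} {A : Matrix α α ℝ}
    (hM : ∀ n, (M n).PosSemidef) (h : ∀ x y, Tendsto (fun n => M n x y) atTop (𝓝 (A x y))) :
    A.PosSemidef := by
  refine ⟨Matrix.IsHermitian.ext fun x y => ?_, fun v => ?_⟩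
  · exact tendsto_nhds_unique ((h y x).star.congr fun n => (hM n).isHermitian.apply x y) (h x y)
  · exact ge_of_tendsto' (tendsto_finsetSum _ fun x _ => tendsto_finsetSum _ fun y _ =>
      ((h x y).const_mul (star (v x))).mul_const (v y)) fun n => (hM n).2 v

section PosSemidef

variable [Finite α]

lemma posSemidef_const {a : ℝ} (ha : 0 ≤ a) : (Matrix.of fun _ _ : α => a).PosSemidef := by
  convert (Matrix.posSemidef_vecMulVec_self_star fun _ : α => √a) using 1
  ext x y
  simp [Matrix.vecMulVec_apply, Real.mul_self_sqrt ha]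

lemma posSemidef_map_pow {A : Matrix α α ℝ} (hA : A.PosSemidef) (n : ℕ) :
    (A.map (· ^ n)).PosSemidef := by
  induction n with
  | zero =>
    convert posSemidef_const (α := α) zero_le_one using 1
    ext x y
    simp
  | succ n ih =>
    have hmul : A.map (· ^ (n + 1)) = A.map (· ^ n) ⊙ A := by
      ext x y
      simp [pow_succ]
    exact hmul ▸ ih.hadamard hA

lemma posSemidef_prod {B : ι → Matrix α α ℝ} (hB : ∀ i, (B i).PosSemidef) (s : Finset ι) :
    (Matrix.of fun x y => ∏ i ∈ s, B i x y).PosSemidef := by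
  classical
  induction s using Finset.induction_on with
  | empty => simpa using posSemidef_const (α := α) zero_le_one
  | insert i s hi ih =>
    have hmul : (Matrix.of fun x y => ∏ j ∈ insert i s, B j x y) =
        B i ⊙ Matrix.of fun x y => ∏ j ∈ s, B j x y := by
      ext x y
      simp [prod_insert hi]
    exact hmul ▸ (hB i).hadamard ih

lemma posSemidef_two_add_coshSqrt {A : Matrix α α ℝ} (hA : A.PosSemidef) :
    (A.map fun x => 2 + coshSqrt x).PosSemidef := by
  refine posSemidef_of_tendsto (M := fun n => (Matrix.of fun _ _ => 2) +
    ∑ m ∈ range n, ((2 * m).factorial : ℝ)⁻¹ • A.map (· ^ m)) (fun n => ?_) fun x y => ?_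
  · exact (posSemidef_const zero_le_two).add <| Matrix.posSemidef_sum _ fun m _ =>
      (posSemidef_map_pow hA m).smul (by positivity)
  · simpa [Matrix.sum_apply, div_eq_inv_mul] using
      (hasSum_coshSqrt (A x y)).tendsto_sum_nat.const_add 2

end PosSemidef

variable [Fintype ι] [DecidableEq ι]

/-- The test function of the geometric lemma. Summed over all pairs of vectors it is nonnegative,
although it is at most `-1` as soon as one coordinate is very negative. -/
noncomputable def testFunction (x : ι → ℝ) : ℝ :=
  ∑ j, x j * ∏ i ∈ univ.erase j, (2 + coshSqrt (x i))

lemma sum_testFunction_nonneg [Fintype α] {Z : ι → Matrix α α ℝ} (hZ : ∀ i, (Z i).PosSemidef) :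
    0 ≤ ∑ p : α × α, testFunction fun i => Z i p.1 p.2 := by
  have hF : (Matrix.of fun x y => testFunction fun i => Z i x y).PosSemidef := by
    have hsum : (Matrix.of fun x y => testFunction fun i => Z i x y) =
        ∑ j, Z j ⊙ Matrix.of fun x y =>
          ∏ i ∈ univ.erase j, (Z i).map (fun x => 2 + coshSqrt x) x y := by
      ext x y
      simp [testFunction, Matrix.sum_apply]
    exact hsum ▸ Matrix.posSemidef_sum univ fun j _ => (hZ j).hadamard
      (posSemidef_prod (fun i => posSemidef_two_add_coshSqrt (hZ i)) (univ.erase j))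
  simpa [dotProduct, Matrix.mulVec, Fintype.sum_prod_type] using
    hF.dotProduct_mulVec_nonneg fun _ => 1

lemma testFunction_eq_prod_mul_sum (x : ι → ℝ) :
    testFunction x = (∏ i, (2 + coshSqrt (x i))) * ∑ j, x j / (2 + coshSqrt (x j)) := by
  rw [testFunction, mul_sum]
  refine sum_congr rfl fun j _ => ?_
  rw [← mul_prod_erase univ _ (mem_univ j)]
  have : 0 < 2 + coshSqrt (x j) := by linarith [neg_one_le_coshSqrt (x j)]
  field_simp

lemma testFunction_le_neg_one {x : ι → ℝ} {i : ι} (hi : x i < -(3 * Fintype.card ι)) :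
    testFunction x ≤ -1 := by
  have hg (j : ι) : 1 ≤ 2 + coshSqrt (x j) := by linarith [neg_one_le_coshSqrt (x j)]
  have hcard : (1 : ℝ) ≤ Fintype.card ι := by exact_mod_cast Fintype.card_pos_iff.2 ⟨i⟩
  have hprod : 1 ≤ ∏ j, (2 + coshSqrt (x j)) := Finset.one_le_prod fun j _ => hg j
  have hneg : x i / (2 + coshSqrt (x i)) ≤ -Fintype.card ι := by
    rw [div_le_iff₀ (by linarith [hg i])]
    nlinarith [coshSqrt_le_one (x := x i) (by linarith)]
  have hrest : ∑ j ∈ univ.erase i, x j / (2 + coshSqrt (x j)) ≤ Fintype.card ι - 1 := by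
    calc ∑ j ∈ univ.erase i, x j / (2 + coshSqrt (x j))
        ≤ ∑ _j ∈ univ.erase i, (1 : ℝ) := sum_le_sum fun j _ =>
          (div_le_one (by linarith [hg j])).2 (le_two_add_coshSqrt _)
      _ = Fintype.card ι - 1 := by
        rw [sum_const, nsmul_one, cast_card_erase_of_mem (mem_univ i), card_univ]
  have hsum : ∑ j, x j / (2 + coshSqrt (x j)) ≤ -1 := by
    rw [← add_sum_erase univ _ (mem_univ i)]
    linarith
  rw [testFunction_eq_prod_mul_sum]
  nlinarith

lemma le_two_mul_exp_sqrt (x : ℝ) : x ≤ 2 * Real.exp √x := by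
  rcases lt_or_ge x 0 with h | h
  · linarith [Real.exp_pos √x]
  · have := Real.quadratic_le_exp_of_nonneg (Real.sqrt_nonneg x)
    rw [Real.sq_sqrt h] at this
    linarith [Real.sqrt_nonneg x]

lemma testFunction_le_of_forall_le {x : ι → ℝ} {a : ℝ} (ha : ∀ i, x i ≤ a) :
    testFunction x ≤
      2 * Fintype.card ι * 3 ^ Fintype.card ι * Real.exp (Fintype.card ι * √a) := by
  have hg (i : ι) : 0 ≤ 2 + coshSqrt (x i) := by linarith [neg_one_le_coshSqrt (x i)]
  have hexp (i : ι) : Real.exp √(x i) ≤ Real.exp √a := by gcongr; exact ha _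
  have hone : 1 ≤ Real.exp √a := Real.one_le_exp (Real.sqrt_nonneg a)
  have hfactor (i : ι) : 2 + coshSqrt (x i) ≤ 3 * Real.exp √a := by
    linarith [coshSqrt_le_exp_sqrt (x i), hexp i]
  have hterm (j : ι) : x j * ∏ i ∈ univ.erase j, (2 + coshSqrt (x i)) ≤
      2 * (3 * Real.exp √a) ^ Fintype.card ι := by
    calc x j * ∏ i ∈ univ.erase j, (2 + coshSqrt (x i))
        ≤ (2 * (3 * Real.exp √a)) * ∏ i ∈ univ.erase j, (3 * Real.exp √a) := by
          gcongr
          · exact prod_nonneg fun i _ => hg i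
          · linarith [le_two_mul_exp_sqrt (x j), hexp j]
          · exact fun i _ => hg i
          · exact hfactor _
      _ = 2 * (3 * Real.exp √a) ^ Fintype.card ι := by
          rw [mul_assoc, mul_prod_erase univ (fun _ => 3 * Real.exp √a) (mem_univ j),
            prod_const, card_univ]
  calc testFunction x ≤ ∑ _j : ι, 2 * (3 * Real.exp √a) ^ Fintype.card ι :=
        sum_le_sum fun j _ => hterm j
    _ = _ := by
        rw [sum_const, card_univ, nsmul_eq_mul, mul_pow, Real.exp_nat_mul]
        ring

lemma testFunction_le_sum_exp (x : ι → ℝ) :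
    testFunction x ≤ ∑ l, 2 * Fintype.card ι * 3 ^ Fintype.card ι *
      Real.exp (Fintype.card ι * √(x l)) := by
  cases isEmpty_or_nonempty ι
  · simp [testFunction]
  obtain ⟨l, hl⟩ := Finite.exists_max x
  exact (testFunction_le_of_forall_le hl).trans
    (single_le_sum (f := fun l => 2 * Fintype.card ι * 3 ^ Fintype.card ι *
      Real.exp (Fintype.card ι * √(x l))) (fun i _ => by positivity) (mem_univ l))

end TestFunction

section GeometricLemma

open Real in
lemma sum_exp_le_of_card_le {α : Type*} {E : Finset α} {s : α → ℝ} (hs : ∀ p ∈ E, 0 ≤ s p)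
    {a b : ℝ} (ha : 0 ≤ a)
    (hE : ∀ n : ℕ, (#{p ∈ E | (n : ℝ) ≤ s p} : ℝ) ≤ b * exp (-((a + 1) * n))) :
    ∑ p ∈ E, exp (a * s p) ≤ 2 * exp a * b := by
  have hb : 0 ≤ b := by simpa using (Nat.cast_nonneg _).trans (hE 0)
  have hlevel (n : ℕ) : ∑ p ∈ E with ⌊s p⌋₊ = n, exp (a * s p) ≤ exp a * b * (1 / 2) ^ n := by
    have hexp : exp (-(n : ℝ)) ≤ (1 / 2) ^ n := by
      rw [← mul_neg_one, exp_nat_mul, exp_neg, inv_eq_one_div]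
      gcongr
      linarith [add_one_le_exp (1 : ℝ)]
    have hcard : (#{p ∈ E | ⌊s p⌋₊ = n} : ℝ) ≤ b * exp (-((a + 1) * n)) := by
      refine le_trans (mod_cast card_le_card fun p hp => ?_) (hE n)
      simp only [mem_filter] at hp ⊢
      exact ⟨hp.1, hp.2 ▸ Nat.floor_le (hs p hp.1)⟩
    calc ∑ p ∈ E with ⌊s p⌋₊ = n, exp (a * s p)
        ≤ ∑ p ∈ E with ⌊s p⌋₊ = n, exp (a * (n + 1)) := by
          refine sum_le_sum fun p hp => ?_
          have := Nat.lt_floor_add_one (s p)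
          rw [(mem_filter.1 hp).2] at this
          gcongr
      _ = #{p ∈ E | ⌊s p⌋₊ = n} * exp (a * (n + 1)) := by rw [sum_const, nsmul_eq_mul]
      _ ≤ b * exp (-((a + 1) * n)) * exp (a * (n + 1)) := by gcongr
      _ = exp a * b * exp (-n) := by
          rw [mul_assoc, ← exp_add, mul_comm (exp a), mul_assoc, ← exp_add]
          ring_nf
      _ ≤ exp a * b * (1 / 2) ^ n := by gcongr
  calc ∑ p ∈ E, exp (a * s p)
      = ∑ n ∈ range (E.sup (fun p => ⌊s p⌋₊) + 1), ∑ p ∈ E with ⌊s p⌋₊ = n, exp (a * s p) :=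
        (sum_fiberwise_of_maps_to (fun p hp => mem_range.2 <| Nat.lt_succ_of_le <|
          le_sup (f := fun p => ⌊s p⌋₊) hp) _).symm
    _ ≤ ∑ n ∈ range (E.sup (fun p => ⌊s p⌋₊) + 1), exp a * b * (1 / 2) ^ n :=
        sum_le_sum fun n _ => hlevel n
    _ ≤ exp a * b * 2 := by
        rw [← mul_sum]
        gcongr
        exact sum_geometric_two_le _
    _ = 2 * exp a * b := by ring

/-- The constant factor in the density of correlated pairs guaranteed by the geometric lemma
for `r` families of vectors. -/
noncomputable def correlationDensity (r : ℕ) : ℝ := 1 / (16 * r ^ 2 * 3 ^ r * Real.exp r)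

/-- The rate `C` at which the density `β exp (-C √(lam + 1))` of pairs with correlation at least
`lam`, guaranteed by the geometric lemma for `r` families of vectors, decays. -/
noncomputable def correlationRate (r : ℕ) : ℝ := (r + 1) * √(3 * r)

lemma correlationDensity_pos {r : ℕ} (hr : 0 < r) : 0 < correlationDensity r := by
  unfold correlationDensity
  positivity

lemma correlationRate_pos {r : ℕ} (hr : 0 < r) : 0 < correlationRate r := by
  unfold correlationRate
  positivity

lemma correlationDensity_le {r : ℕ} (hr : 0 < r) : correlationDensity r ≤ 1 / 8 := by
  have hr' : (1 : ℝ) ≤ (r : ℝ) ^ 2 := one_le_pow₀ (mod_cast hr)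
  have hpow : (1 : ℝ) ≤ 3 ^ r := one_le_pow₀ (by norm_num)
  have hexp : 1 ≤ Real.exp r := Real.one_le_exp (by positivity)
  refine one_div_le_one_div_of_le (by norm_num) ?_
  calc (8 : ℝ) ≤ 16 * 1 * 1 * 1 := by norm_num
    _ ≤ 16 * r ^ 2 * 3 ^ r * Real.exp r := by gcongr

variable {ι α : Type*} [Fintype ι] [Fintype α] {Z : ι → Matrix α α ℝ}

open Classical in
/-- The pairs at which none of the kernels is below `-1`. -/
noncomputable def mildPairs (Z : ι → Matrix α α ℝ) : Finset (α × α) :=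
  {p | ∀ i, -1 ≤ Z i p.1 p.2}

lemma sum_testFunction_compl_mildPairs [DecidableEq ι] [DecidableEq α] [Nonempty ι] :
    ∑ p ∈ (mildPairs Z)ᶜ, testFunction (fun i => 3 * Fintype.card ι * Z i p.1 p.2) ≤
      #(mildPairs Z) - (Fintype.card α : ℝ) ^ 2 := by
  have hcard : 0 < (Fintype.card ι : ℝ) := mod_cast Fintype.card_pos
  calc ∑ p ∈ (mildPairs Z)ᶜ, testFunction (fun i => 3 * Fintype.card ι * Z i p.1 p.2)
      ≤ ∑ _p ∈ (mildPairs Z)ᶜ, (-1 : ℝ) := by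
        refine sum_le_sum fun p hp => ?_
        simp only [mildPairs, mem_compl, mem_filter_univ, not_forall, not_le] at hp
        obtain ⟨i, hi⟩ := hp
        exact testFunction_le_neg_one (i := i) (by nlinarith)
    _ = #(mildPairs Z) - (Fintype.card α : ℝ) ^ 2 := by
        rw [sum_const, nsmul_eq_mul, card_compl, Nat.cast_sub (card_le_univ _), Fintype.card_prod]
        push_cast
        ring

local notation "r" => Fintype.card ι

/-- No kernel of the family is correlated at any level on the proportion of pairs which the
geometric lemma predicts; this is the assumption to be refuted. -/
def IsUncorrelated (Z : ι → Matrix α α ℝ) : Prop :=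
  ∀ l, ∀ lam : ℝ, -1 ≤ lam → (#{p ∈ mildPairs Z | lam ≤ Z l p.1 p.2} : ℝ) <
    correlationDensity r * Real.exp (-(correlationRate r * √(lam + 1))) * Fintype.card α ^ 2

lemma IsUncorrelated.card_le [Nonempty ι] (hZ : IsUncorrelated Z) (l : ι) (n : ℕ) :
    (#{p ∈ mildPairs Z | (n : ℝ) ≤ √(3 * r * (Z l p.1 p.2 + 1))} : ℝ) ≤
      correlationDensity r * Fintype.card α ^ 2 * Real.exp (-((r + 1) * n)) := by
  have : 0 < r := Fintype.card_pos
  have hlam : -1 ≤ (n ^ 2 / (3 * r) - 1 : ℝ) := by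
    linarith [show (0 : ℝ) ≤ n ^ 2 / (3 * r) by positivity]
  have hrate : correlationRate r * √(n ^ 2 / (3 * r) - 1 + 1) = (r + 1) * n := by
    rw [correlationRate, mul_assoc, ← Real.sqrt_mul (by positivity), sub_add_cancel,
      mul_div_cancel₀ _ (by positivity), Real.sqrt_sq (by positivity)]
  have hlt := (hZ l _ hlam).le
  rw [hrate, mul_right_comm] at hlt
  refine le_trans (Nat.cast_le.2 <| card_le_card fun p hp => ?_) hlt
  rw [mem_filter] at hp ⊢
  have hp1 : 0 ≤ Z l p.1 p.2 + 1 := by linarith [(mem_filter.1 hp.1).2 l]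
  refine ⟨hp.1, ?_⟩
  rw [sub_le_iff_le_add, div_le_iff₀ (by positivity), mul_comm]
  exact (Real.le_sqrt (by positivity) (by positivity)).1 hp.2

lemma IsUncorrelated.card_mildPairs_le [Nonempty ι] (hZ : IsUncorrelated Z) :
    (#(mildPairs Z) : ℝ) ≤ correlationDensity r * Fintype.card α ^ 2 := by
  obtain ⟨l⟩ := ‹Nonempty ι›
  have hcard := hZ.card_le l 0
  rw [filter_true_of_mem fun p _ => Nat.cast_zero (R := ℝ) ▸ Real.sqrt_nonneg _] at hcard
  simpa using hcard

lemma IsUncorrelated.sum_testFunction_le [DecidableEq ι] [Nonempty ι] (hZ : IsUncorrelated Z) :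
    ∑ p ∈ mildPairs Z, testFunction (fun i => 3 * r * Z i p.1 p.2) ≤ Fintype.card α ^ 2 / 4 := by
  have hexp (l : ι) : ∑ p ∈ mildPairs Z, Real.exp (r * √(3 * r * Z l p.1 p.2)) ≤
      2 * Real.exp r * (correlationDensity r * Fintype.card α ^ 2) := by
    refine le_trans (sum_le_sum fun p _ => ?_) (sum_exp_le_of_card_le
      (fun p _ => Real.sqrt_nonneg _) (by positivity) (hZ.card_le l))
    gcongr
    linarith
  calc ∑ p ∈ mildPairs Z, testFunction (fun i => 3 * r * Z i p.1 p.2)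
      ≤ ∑ p ∈ mildPairs Z, ∑ l, 2 * r * 3 ^ r * Real.exp (r * √(3 * r * Z l p.1 p.2)) :=
        sum_le_sum fun p _ => testFunction_le_sum_exp _
    _ = ∑ l, 2 * r * 3 ^ r * ∑ p ∈ mildPairs Z, Real.exp (r * √(3 * r * Z l p.1 p.2)) := by
        rw [sum_comm]
        simp only [mul_sum]
    _ ≤ ∑ _l : ι, 2 * r * 3 ^ r *
          (2 * Real.exp r * (correlationDensity r * Fintype.card α ^ 2)) := by
        gcongr with l
        exact hexp l
    _ = Fintype.card α ^ 2 / 4 := by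
        rw [sum_const, card_univ, nsmul_eq_mul, correlationDensity]
        field_simp
        ring

theorem exists_le_card_correlated [Nonempty ι] [Nonempty α] (hZ : ∀ i, (Z i).PosSemidef) :
    ∃ l, ∃ lam : ℝ, -1 ≤ lam ∧
      correlationDensity r * Real.exp (-(correlationRate r * √(lam + 1))) *
        Fintype.card α ^ 2 ≤ #{p ∈ mildPairs Z | lam ≤ Z l p.1 p.2} := by
  classical
  by_contra! hcon
  replace hcon : IsUncorrelated Z := hcon
  have hα : 0 < (Fintype.card α : ℝ) ^ 2 := by have := Fintype.card_pos (α := α); positivity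
  have hsum := sum_testFunction_nonneg fun i =>
    (hZ i).smul (show (0 : ℝ) ≤ 3 * r by positivity)
  simp only [Matrix.smul_apply, smul_eq_mul] at hsum
  rw [← sum_add_sum_compl (mildPairs Z)] at hsum
  have hcard : (#(mildPairs Z) : ℝ) ≤ 1 / 8 * Fintype.card α ^ 2 :=
    hcon.card_mildPairs_le.trans <| by gcongr; exact correlationDensity_le Fintype.card_pos
  linarith [hcon.sum_testFunction_le, sum_testFunction_compl_mildPairs (Z := Z)]

end GeometricLemma

section CorrelatedNeighbourhoods

variable {ι α V : Type*}

lemma posSemidef_sum_mul [Finite α] (Y : Finset V) (f : α → V → ℝ) :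
    (Matrix.of fun x y => ∑ u ∈ Y, f x u * f y u).PosSemidef := by
  have hsum : (Matrix.of fun x y => ∑ u ∈ Y, f x u * f y u) =
      ∑ u ∈ Y, Matrix.vecMulVec (fun x => f x u) (star fun x => f x u) := by
    ext x y
    simp [Matrix.sum_apply, Matrix.vecMulVec_apply]
  exact hsum ▸ Matrix.posSemidef_sum Y fun u _ => Matrix.posSemidef_vecMulVec_self_star _

variable [DecidableEq V]

/-- The inner products of the centred indicator vectors of `d`-element subsets `T x` of `Y`,
normalised so that the value `lam` means that two of the subsets share `lam * a * d` elements more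
than they would in a random position. -/
noncomputable def overlapKernel (Y : Finset V) (d : ℕ) (a : ℝ) (T : α → Finset V) :
    Matrix α α ℝ :=
  (a * d)⁻¹ • Matrix.of fun x y => ∑ u ∈ Y,
    ((if u ∈ T x then 1 else 0) - (d : ℝ) / #Y) * ((if u ∈ T y then 1 else 0) - (d : ℝ) / #Y)

lemma posSemidef_overlapKernel [Finite α] (Y : Finset V) (d : ℕ) {a : ℝ} (ha : 0 ≤ a)
    (T : α → Finset V) : (overlapKernel Y d a T).PosSemidef :=
  (posSemidef_sum_mul Y fun x u => (if u ∈ T x then (1 : ℝ) else 0) - (d : ℝ) / #Y).smul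
    (by positivity)

lemma sum_centred_indicator_mul {S T Y : Finset V} {d : ℕ} (hS : S ⊆ Y) (hT : T ⊆ Y)
    (hSd : #S = d) (hTd : #T = d) :
    ∑ u ∈ Y, (((if u ∈ S then 1 else 0) - (d : ℝ) / #Y) *
      ((if u ∈ T then 1 else 0) - (d : ℝ) / #Y)) = #(S ∩ T) - (d : ℝ) / #Y * d := by
  have hind {A : Finset V} (hA : A ⊆ Y) : ∑ u ∈ Y, (if u ∈ A then (1 : ℝ) else 0) = #A := by
    rw [sum_boole, filter_mem_eq_inter, inter_eq_right.2 hA]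
  have hST := hind (inter_subset_left.trans hS : S ∩ T ⊆ Y)
  have hmul (u : V) : (if u ∈ S then (1 : ℝ) else 0) * (if u ∈ T then 1 else 0) =
      if u ∈ S ∩ T then 1 else 0 := by
    simp only [mem_inter, ite_and, ite_mul, one_mul, zero_mul]
  have hd : (#Y : ℝ) * (d / #Y) = d := by
    rcases Y.eq_empty_or_nonempty with rfl | hY
    · simp [← hSd, subset_empty.1 hS]
    · have := hY.card_pos
      field_simp
  simp only [sub_mul, mul_sub, hmul, sum_sub_distrib, ← sum_mul, ← mul_sum, hST, hind hS,
    hind hT, hSd, hTd, sum_const, nsmul_eq_mul]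
  linear_combination (d / #Y : ℝ) * hd

lemma le_card_inter_of_le_overlapKernel {Y : Finset V} {d : ℕ} (hd : 0 < d) {a : ℝ} (ha : 0 < a)
    {T : α → Finset V} (hTY : ∀ x, T x ⊆ Y) (hTd : ∀ x, #(T x) = d) {x y : α} {lam : ℝ}
    (h : lam ≤ overlapKernel Y d a T x y) :
    ((d : ℝ) / #Y + lam * a) * d ≤ #(T x ∩ T y) := by
  rw [overlapKernel, Matrix.smul_apply, Matrix.of_apply, smul_eq_mul,
    sum_centred_indicator_mul (hTY x) (hTY y) (hTd x) (hTd y), inv_mul_eq_div,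
    le_div_iff₀ (by positivity)] at h
  linarith

lemma exists_le_card_filter [Fintype α] [Nonempty α] {P : α → α → Prop}
    [∀ x, DecidablePred (P x)] {b : ℝ}
    (hb : b * Fintype.card α ^ 2 ≤ #{p : α × α | P p.1 p.2}) :
    ∃ x, b * Fintype.card α ≤ #{y | P x y} := by
  have hsum : (#{p : α × α | P p.1 p.2} : ℝ) = ∑ x, (#{y | P x y} : ℝ) := by
    push_cast [card_filter]
    exact Fintype.sum_prod_type _
  obtain ⟨x, -, hx⟩ := exists_le_of_sum_le (s := univ) (f := fun _ : α => b * Fintype.card α)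
    (g := fun x => (#{y | P x y} : ℝ)) univ_nonempty <| by
      rw [← hsum, sum_const, card_univ, nsmul_eq_mul]
      linarith
  exact ⟨x, hx⟩

variable [DecidableEq ι]

/-- The neighbours of `x` in colour `i` inside the set `S`. -/
def colourNbhd (c : Sym2 V → ι) (i : ι) (x : V) (S : Finset V) : Finset V :=
  {y ∈ S | y ≠ x ∧ c s(x, y) = i}

lemma colourNbhd_subset (c : Sym2 V → ι) (i : ι) (x : V) (S : Finset V) :
    colourNbhd c i x S ⊆ S := filter_subset _ _

variable [Fintype ι] [Nonempty ι]

local notation "r" => Fintype.card ι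

theorem exists_correlated_nbhds (c : Sym2 V → ι) {X : Finset V} (hX : X.Nonempty)
    {Y : ι → Finset V} {d : ι → ℕ} (hd : ∀ i, 0 < d i)
    (hdeg : ∀ i, ∀ x ∈ X, d i ≤ #(colourNbhd c i x (Y i))) {a : ι → ℝ} (ha : ∀ i, 0 < a i) :
    ∃ x ∈ X, ∃ l : ι, ∃ lam : ℝ, -1 ≤ lam ∧ ∃ X' ⊆ X, ∃ Y' : ι → Finset V,
      (∀ i, Y' i ⊆ colourNbhd c i x (Y i) ∧ #(Y' i) = d i) ∧
      correlationDensity r * Real.exp (-(correlationRate r * √(lam + 1))) * #X ≤ #X' ∧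
      (∀ y ∈ X', ((d l : ℝ) / #(Y l) + lam * a l) * d l ≤ #(colourNbhd c l y (Y' l))) ∧
      ∀ i, ∀ y ∈ X', ((d i : ℝ) / #(Y i) - a i) * d i ≤ #(colourNbhd c i y (Y' i)) := by
  classical
  have : Nonempty X := hX.to_subtype
  choose T hT hTd using fun i (x : X) => exists_subset_card_eq (hdeg i x x.2)
  have hTY (i : ι) (x : X) : T i x ⊆ Y i := (hT i x).trans (colourNbhd_subset _ _ _ _)
  obtain ⟨l, lam, hlam, hcard⟩ := exists_le_card_correlated fun i =>
    posSemidef_overlapKernel (Y i) (d i) (ha i).le (T i)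
  rw [mildPairs, filter_filter] at hcard
  let Correlated (x y : X) : Prop := (∀ i, -1 ≤ overlapKernel (Y i) (d i) (a i) (T i) x y) ∧
    lam ≤ overlapKernel (Y l) (d l) (a l) (T l) x y
  obtain ⟨x, hx⟩ := exists_le_card_filter (P := Correlated) hcard
  have hnbhd {i : ι} {y : X} {mu : ℝ} (h : mu ≤ overlapKernel (Y i) (d i) (a i) (T i) x y) :
      ((d i : ℝ) / #(Y i) + mu * a i) * d i ≤ #(colourNbhd c i y (T i x)) := by
    refine (le_card_inter_of_le_overlapKernel (hd i) (ha i) (hTY i) (hTd i) h).trans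
      (Nat.cast_le.2 (card_le_card fun u hu => ?_))
    rw [mem_inter] at hu
    exact mem_filter.2 ⟨hu.1, (mem_filter.1 (hT i y hu.2)).2⟩
  refine ⟨x, x.2, l, lam, hlam, Finset.map (Function.Embedding.subtype _) {y | Correlated x y},
    map_subtype_subset _, fun i => T i x,
    fun i => ⟨hT i x, hTd i x⟩, ?_, ?_, ?_⟩
  · rw [card_map]
    simpa using hx
  · simp only [Finset.mem_map, mem_filter_univ]
    rintro _ ⟨y, hy, rfl⟩
    exact hnbhd hy.2
  · simp only [Finset.mem_map, mem_filter_univ]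
    rintro i _ ⟨y, hy, rfl⟩
    have := hnbhd (hy.1 i)
    rwa [neg_one_mul, ← sub_eq_add_neg] at this

end CorrelatedNeighbourhoods

section Logarithm

variable {u : ℝ}

lemma half_le_log_one_add (h0 : 0 ≤ u) (h1 : u ≤ 1) : u / 2 ≤ Real.log (1 + u) := by
  refine le_trans ?_ (Real.le_log_one_add_of_nonneg h0)
  rw [div_le_div_iff₀ two_pos (by linarith)]
  nlinarith

lemma neg_two_mul_le_log_one_sub (h0 : 0 ≤ u) (h1 : u ≤ 1 / 2) :
    -(2 * u) ≤ Real.log (1 - u) := by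
  refine le_trans ?_ (Real.one_sub_inv_le_log_of_pos (by linarith))
  have : (1 - u)⁻¹ ≤ 1 + 2 * u := by
    rw [inv_le_iff_one_le_mul₀ (by linarith)]
    nlinarith
  linarith

end Logarithm

section BookAlgorithm

variable {V ι : Type*}

/-- A (possibly incomplete) book of colour `i`: the spine `T` is a monochromatic clique, completely
joined in the same colour to the pages `Y`. -/
structure IsBook (c : Sym2 V → ι) (i : ι) (T Y : Finset V) : Prop where
  isClique : (T : Set V).Pairwise fun u v => c s(u, v) = i
  join : ∀ v ∈ T, ∀ y ∈ Y, y ≠ v ∧ c s(v, y) = i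

namespace IsBook

variable {c : Sym2 V → ι} {i : ι} {T X Y Y' : Finset V} {x : V}

lemma empty (c : Sym2 V → ι) (i : ι) (Y : Finset V) : IsBook c i ∅ Y :=
  ⟨by simp, by simp⟩

lemma mono (h : IsBook c i T Y) (hY : Y' ⊆ Y) : IsBook c i T Y' :=
  ⟨h.isClique, fun v hv y hy => h.join v hv y (hY hy)⟩

lemma notMem (h : IsBook c i T X) (hx : x ∈ X) : x ∉ T :=
  fun hxT => (h.join x hxT x hx).1 rfl

lemma insert [DecidableEq V] [DecidableEq ι] (hX : IsBook c i T X) (hY : IsBook c i T Y)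
    (hx : x ∈ X) (hY' : Y' ⊆ colourNbhd c i x Y) : IsBook c i (insert x T) Y' where
  isClique := by
    rw [coe_insert, Set.pairwise_insert]
    refine ⟨hX.isClique, fun v hv _ => ?_⟩
    have := (hX.join v hv x hx).2
    exact ⟨Sym2.eq_swap ▸ this, this⟩
  join v hv y hy := by
    have hy' := mem_filter.1 (hY' hy)
    obtain rfl | hv := mem_insert.1 hv
    · exact hy'.2
    · exact hY.join v hv y hy'.1

end IsBook

lemma sum_card_colourNbhd [DecidableEq V] [Fintype ι] [DecidableEq ι] (c : Sym2 V → ι) (x : V)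
    (S : Finset V) : ∑ i, #(colourNbhd c i x S) = #(S.erase x) := by
  rw [card_eq_sum_card_fiberwise (f := fun y => c s(x, y)) (t := univ) fun _ _ => mem_univ _]
  refine sum_congr rfl fun i _ => congr_arg card (Finset.ext fun y => ?_)
  simp only [colourNbhd, mem_filter, mem_erase]
  tauto

lemma exists_le_card_colourNbhd [DecidableEq V] [Fintype ι] [DecidableEq ι] [Nonempty ι]
    (c : Sym2 V → ι) (x : V) (S : Finset V) {a : ι → ℝ} (ha : ∑ i, a i ≤ #S - 1) :
    ∃ j, a j ≤ #(colourNbhd c j x S) := by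
  obtain ⟨j, -, hj⟩ := exists_le_of_sum_le (s := univ) (f := a)
    (g := fun j => (#(colourNbhd c j x S) : ℝ)) univ_nonempty <| by
      have : (#S : ℝ) ≤ #(S.erase x) + 1 := by
        exact_mod_cast Nat.sub_le_iff_le_add.1 pred_card_le_card_erase
      rw [← Nat.cast_sum, sum_card_colourNbhd]
      linarith
  exact ⟨j, hj⟩

lemma sum_apply_update [Fintype ι] [DecidableEq ι] {σ M : Type*} [AddCommMonoid M] (f : ι → σ → M)
    (s : ι → σ) (j : ι) (u : σ) :
    ∑ i, f i (Function.update s j u i) + f j (s j) = ∑ i, f i (s i) + f j u := by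
  simp only [Function.apply_update f, sum_update_of_mem (mem_univ j)]
  rw [← sum_sdiff (subset_univ {j}), sum_singleton]
  abel

/-- The constants of the book algorithm with `q` colours and target spine size `t`: the pages keep
a density of about `p` in every colour, up to an error `δ`; each step shrinks a set of pages by a
factor at most `exp ell`; lengthening a spine costs the reservoir a factor `exp A`, while increasing
a potential by `z` costs it a factor `exp (B z)`; and `Λ` separates the correlations that are used
to lengthen a spine from those that are used to boost a density. The potential grows by at least
`1 / D` in each boost. -/
structure BookParameters (q t : ℕ) where
  (p δ ell D A B Λ : ℝ)
  two_le : 2 ≤ t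
  delta_pos : 0 < δ
  delta_le : δ ≤ p
  exp_neg_ell_le : Real.exp (-ell) ≤ p - δ
  ell_nonneg : 0 ≤ ell
  D_nonneg : 0 ≤ D
  A_nonneg : 0 ≤ A
  B_nonneg : 0 ≤ B
  threshold_pos : 0 < Λ
  exp_neg_A_le : ∀ lam, -1 ≤ lam → lam ≤ Λ → Real.exp (-A) ≤
    correlationDensity q * Real.exp (-(correlationRate q * √(lam + 1))) / (2 * q)
  exp_neg_B_le : ∀ lam, Λ ≤ lam → lam ≤ 8 * t / δ → Real.exp (-(B * Real.log (1 + lam / t))) ≤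
    correlationDensity q * Real.exp (-(correlationRate q * √(lam + 1)))
  one_le_D_mul : ∀ lam, Λ ≤ lam → 1 ≤ D * Real.log (1 + lam / t)

/-- The state of the book algorithm in one colour: a book, together with a lower bound `degree` for
the number of neighbours in `pages` of each vertex of the reservoir. -/
structure BookState (V : Type*) where
  spine : Finset V
  pages : Finset V
  degree : ℕ

namespace BookParameters

variable {q t : ℕ}

lemma t_pos (P : BookParameters q t) : (0 : ℝ) < t :=
  Nat.cast_pos.2 (zero_lt_two.trans_le P.two_le)

variable (P : BookParameters q t)

/-- The amount by which the density of a state exceeds the smallest tolerated density `p - δ`. -/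
noncomputable def excess (s : BookState V) : ℝ := (s.degree : ℝ) / #s.pages - P.p + P.δ

/-- The potential of a state. The term `2 |T| / t` compensates for the decrease of the logarithm
when the spine is lengthened, so that the potential never decreases. -/
noncomputable def potential (s : BookState V) : ℝ :=
  Real.log (P.excess s / P.δ) + 2 * #s.spine / t

/-- An upper bound for the potential. -/
noncomputable def maxPotential : ℝ := Real.log (1 / P.δ) + 2

/-- The logarithm of the factor by which the reservoir may have shrunk on account of one colour. -/
noncomputable def cost (s : BookState V) : ℝ := #s.spine * P.A + P.potential s * P.B

/-- The state reached by passing to the spine `T'` and the pages `Y'`, given that the density is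
now `d / |Y| + μ ε / t`, where `ε` is the previous excess. -/
noncomputable def advance (s : BookState V) (T' Y' : Finset V) (μ : ℝ) : BookState V where
  spine := T'
  pages := Y'
  degree := ⌈((s.degree : ℝ) / #s.pages + μ * (P.excess s / t)) * s.degree⌉₊

/-- The invariants of a state in colour `i`, when the reservoir is `X`, everything happens inside
`S`, and the pages initially number `exp L`. -/
structure IsValid [DecidableEq V] [DecidableEq ι] (c : Sym2 V → ι) (S : Finset V) (L : ℝ)
    (X : Finset V) (i : ι) (s : BookState V) : Prop where
  isBook_reservoir : IsBook c i s.spine X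
  isBook_pages : IsBook c i s.spine s.pages
  spine_subset : s.spine ⊆ S
  pages_subset : s.pages ⊆ S
  card_spine_le : #s.spine ≤ t
  degree_pos : 0 < s.degree
  degree_le : ∀ x ∈ X, s.degree ≤ #(colourNbhd c i x s.pages)
  excess_pos : 0 < P.excess s
  potential_nonneg : 0 ≤ P.potential s
  le_card_pages : Real.exp (L - P.ell * (#s.spine + P.D * P.potential s)) ≤ #s.pages

variable {P} {s : BookState V} {T' X X' Y' : Finset V} {μ : ℝ}

lemma le_excess_advance (hd : 0 < s.degree) (hY' : #Y' = s.degree) :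
    (1 + μ / t) * P.excess s ≤ P.excess (P.advance s T' Y' μ) := by
  have hd' : (0 : ℝ) < s.degree := Nat.cast_pos.2 hd
  have hceil : (s.degree : ℝ) / #s.pages + μ * (P.excess s / t) ≤
      ((P.advance s T' Y' μ).degree : ℝ) / #(P.advance s T' Y' μ).pages := by
    simp only [advance, hY']
    exact (le_div_iff₀ hd').2 (Nat.le_ceil _)
  have hsplit : (1 + μ / t) * P.excess s = (s.degree : ℝ) / #s.pages + μ * (P.excess s / t) -
      P.p + P.δ := by
    rw [add_mul, one_mul, div_mul_comm, mul_comm (P.excess s / t)]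
    simp only [excess]
    ring
  rw [hsplit]
  unfold excess at *
  linarith

lemma le_potential_advance (hμ : 0 < 1 + μ / t) (he : 0 < P.excess s) (hd : 0 < s.degree)
    (hY' : #Y' = s.degree) :
    P.potential s + Real.log (1 + μ / t) + 2 * (#T' - #s.spine) / t ≤
      P.potential (P.advance s T' Y' μ) := by
  have hδ := P.delta_pos
  have hlog : Real.log (1 + μ / t) + Real.log (P.excess s / P.δ) ≤
      Real.log (P.excess (P.advance s T' Y' μ) / P.δ) := by
    rw [← Real.log_mul hμ.ne' (by positivity), ← mul_div_assoc]
    exact Real.log_le_log (by positivity)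
      (div_le_div_of_nonneg_right (le_excess_advance hd hY') hδ.le)
  simp only [potential, show (P.advance s T' Y' μ).spine = T' from rfl]
  rw [mul_sub, sub_div]
  linarith

namespace IsValid

variable [DecidableEq V] [DecidableEq ι] {c : Sym2 V → ι} {S : Finset V} {L : ℝ} {i : ι} {x : V}

lemma mono (h : P.IsValid c S L X i s) (hX : X' ⊆ X) : P.IsValid c S L X' i s :=
  { h with
    isBook_reservoir := h.isBook_reservoir.mono hX
    degree_le := fun x hx => h.degree_le x (hX hx) }

lemma card_pages_pos (h : P.IsValid c S L X i s) : (0 : ℝ) < #s.pages :=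
  (Real.exp_pos _).trans_le h.le_card_pages

lemma degree_le_card_pages (h : P.IsValid c S L X i s) (hX : X.Nonempty) :
    s.degree ≤ #s.pages :=
  let ⟨x, hx⟩ := hX
  (h.degree_le x hx).trans (card_le_card (colourNbhd_subset _ _ _ _))

lemma potential_le (h : P.IsValid c S L X i s) (hX : X.Nonempty) :
    P.potential s ≤ P.maxPotential := by
  have hδ := P.delta_pos
  have hdens : (s.degree : ℝ) / #s.pages ≤ 1 :=
    (div_le_one h.card_pages_pos).2 (Nat.cast_le.2 (h.degree_le_card_pages hX))
  have hexcess : P.excess s ≤ 1 := by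
    unfold excess
    linarith [P.delta_le]
  refine add_le_add (Real.log_le_log (div_pos h.excess_pos hδ) ?_) ?_
  · exact div_le_div_of_nonneg_right hexcess hδ.le
  · rw [div_le_iff₀ P.t_pos]
    gcongr
    exact h.card_spine_le

lemma cost_le (h : P.IsValid c S L X i s) (hX : X.Nonempty) :
    P.cost s ≤ t * P.A + P.maxPotential * P.B :=
  add_le_add (mul_le_mul_of_nonneg_right (Nat.cast_le.2 h.card_spine_le) P.A_nonneg)
    (mul_le_mul_of_nonneg_right (h.potential_le hX) P.B_nonneg)

lemma div_eight_le_excess (h : P.IsValid c S L X i s) : P.δ / 8 ≤ P.excess s := by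
  have hδ := P.delta_pos
  have hspine : 2 * (#s.spine : ℝ) / t ≤ 2 := by
    rw [div_le_iff₀ P.t_pos]
    gcongr
    exact h.card_spine_le
  have hlog : -2 ≤ Real.log (P.excess s / P.δ) := by
    have := h.potential_nonneg
    unfold potential at this
    linarith
  have hexp : (1 : ℝ) / 8 ≤ Real.exp (-2) := by
    rw [Real.exp_neg, one_div]
    refine inv_anti₀ (Real.exp_pos _) ?_
    rw [show (2 : ℝ) = 1 + 1 by norm_num, Real.exp_add]
    nlinarith [Real.add_one_le_exp (1 : ℝ), Real.exp_one_lt_d9]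
  have := hexp.trans ((Real.le_log_iff_exp_le (div_pos h.excess_pos hδ)).1 hlog)
  rw [le_div_iff₀ hδ] at this
  linarith

lemma density_advance_pos (h : P.IsValid c S L X i s) (hμ : 0 < 1 + μ / t) :
    0 < (s.degree : ℝ) / #s.pages + μ * (P.excess s / t) := by
  have hsplit : (s.degree : ℝ) / #s.pages + μ * (P.excess s / t) =
      P.p - P.δ + (1 + μ / t) * P.excess s := by
    rw [add_mul, one_mul, div_mul_comm, mul_comm (P.excess s / t)]
    simp only [excess]
    ring
  have := P.exp_neg_ell_le.trans_lt' (Real.exp_pos _)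
  have := mul_pos hμ h.excess_pos
  linarith

lemma advance (h : P.IsValid c S L X i s) (hμ : 0 < 1 + μ / t)
    (hTX : IsBook c i T' X') (hTY : IsBook c i T' Y') (hT'S : T' ⊆ S) (hT't : #T' ≤ t)
    (hY' : Y' ⊆ s.pages) (hY'd : #Y' = s.degree)
    (hdeg : ∀ y ∈ X', ((s.degree : ℝ) / #s.pages + μ * (P.excess s / t)) * s.degree ≤
      #(colourNbhd c i y Y'))
    (hpot : P.potential s ≤ P.potential (P.advance s T' Y' μ))
    (hell : #s.spine + P.D * P.potential s + 1 ≤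
      #T' + P.D * P.potential (P.advance s T' Y' μ)) :
    P.IsValid c S L X' i (P.advance s T' Y' μ) where
  isBook_reservoir := hTX
  isBook_pages := hTY
  spine_subset := hT'S
  pages_subset := hY'.trans h.pages_subset
  card_spine_le := hT't
  degree_pos := Nat.ceil_pos.2 (mul_pos (h.density_advance_pos hμ) (Nat.cast_pos.2 h.degree_pos))
  degree_le y hy := Nat.ceil_le.2 (hdeg y hy)
  excess_pos := (mul_pos hμ h.excess_pos).trans_le (le_excess_advance h.degree_pos hY'd)
  potential_nonneg := h.potential_nonneg.trans hpot
  le_card_pages := by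
    have hdens : Real.exp (-P.ell) ≤ (s.degree : ℝ) / #s.pages := by
      have := h.excess_pos
      unfold excess at this
      linarith [P.exp_neg_ell_le]
    calc Real.exp (L - P.ell * (#T' + P.D * P.potential (P.advance s T' Y' μ)))
        ≤ Real.exp (L - P.ell * (#s.spine + P.D * P.potential s) + -P.ell) := by
          refine Real.exp_le_exp.2 ?_
          linarith [mul_le_mul_of_nonneg_left hell P.ell_nonneg]
      _ ≤ #s.pages * ((s.degree : ℝ) / #s.pages) := by
          rw [Real.exp_add]
          exact mul_le_mul h.le_card_pages hdens (Real.exp_pos _).le (Nat.cast_nonneg _)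
      _ = #Y' := by rw [mul_div_cancel₀ _ h.card_pages_pos.ne', hY'd]

lemma potential_le_lengthen (h : P.IsValid c S L X i s) (hx : x ∈ X) (hY'd : #Y' = s.degree) :
    P.potential s ≤ P.potential (P.advance s (insert x s.spine) Y' (-1)) := by
  have ht := P.t_pos
  have ht2 : (1 : ℝ) / t ≤ 1 / 2 :=
    one_div_le_one_div_of_le two_pos (Nat.ofNat_le_cast.2 P.two_le)
  have hpos : 0 < 1 + (-1 : ℝ) / t := by rw [neg_div]; linarith
  have hlog : -(2 / t : ℝ) ≤ Real.log (1 + -1 / t) := by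
    rw [show (1 : ℝ) + -1 / t = 1 - 1 / t by ring, show (2 : ℝ) / t = 2 * (1 / t) by ring]
    exact neg_two_mul_le_log_one_sub (by positivity) ht2
  have := le_potential_advance (T' := insert x s.spine) hpos h.excess_pos h.degree_pos hY'd
  rw [card_insert_of_notMem (h.isBook_reservoir.notMem hx), Nat.cast_succ, add_sub_cancel_left,
    mul_one] at this
  linarith

lemma lengthen (h : P.IsValid c S L X i s) (hs : #s.spine < t) (hx : x ∈ X) (hxS : x ∈ S)
    (hX' : X' ⊆ colourNbhd c i x X) (hY' : Y' ⊆ colourNbhd c i x s.pages) (hY'd : #Y' = s.degree)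
    (hdeg : ∀ y ∈ X', ((s.degree : ℝ) / #s.pages - P.excess s / t) * s.degree ≤
      #(colourNbhd c i y Y')) :
    P.IsValid c S L X' i (P.advance s (insert x s.spine) Y' (-1)) := by
  have hpot := h.potential_le_lengthen hx hY'd
  have hcard := card_insert_of_notMem (h.isBook_reservoir.notMem hx)
  refine h.advance ?_ (h.isBook_reservoir.insert h.isBook_reservoir hx hX')
    (h.isBook_reservoir.insert h.isBook_pages hx hY') (insert_subset hxS h.spine_subset)
    (by omega) (hY'.trans (colourNbhd_subset _ _ _ _)) hY'd ?_ hpot ?_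
  · have : (1 : ℝ) < t := Nat.one_lt_cast.2 P.two_le
    rw [neg_div, ← sub_eq_add_neg, sub_pos]
    exact (div_lt_one P.t_pos).2 this
  · simpa only [neg_one_mul, ← sub_eq_add_neg] using hdeg
  · rw [hcard]
    push_cast
    linarith [mul_le_mul_of_nonneg_left hpot P.D_nonneg]

lemma potential_add_log_le_boost (h : P.IsValid c S L X i s) (hμ : P.Λ ≤ μ)
    (hY'd : #Y' = s.degree) :
    P.potential s + Real.log (1 + μ / t) ≤ P.potential (P.advance s s.spine Y' μ) := by
  have hμ0 : 0 < μ / t := div_pos (P.threshold_pos.trans_le hμ) P.t_pos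
  simpa using le_potential_advance (T' := s.spine) (by linarith) h.excess_pos h.degree_pos hY'd

lemma boost (h : P.IsValid c S L X i s) (hμ : P.Λ ≤ μ) (hX' : X' ⊆ X) (hY' : Y' ⊆ s.pages)
    (hY'd : #Y' = s.degree)
    (hdeg : ∀ y ∈ X', ((s.degree : ℝ) / #s.pages + μ * (P.excess s / t)) * s.degree ≤
      #(colourNbhd c i y Y')) :
    P.IsValid c S L X' i (P.advance s s.spine Y' μ) := by
  have hμ0 : 0 < μ / t := div_pos (P.threshold_pos.trans_le hμ) P.t_pos
  have hpot := h.potential_add_log_le_boost hμ hY'd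
  have hlog : 0 ≤ Real.log (1 + μ / t) := Real.log_nonneg (by linarith)
  refine h.advance (by linarith) (h.isBook_reservoir.mono hX') (h.isBook_pages.mono hY')
    h.spine_subset h.card_spine_le hY' hY'd hdeg (by linarith) ?_
  linarith [mul_le_mul_of_nonneg_left hpot P.D_nonneg, P.one_le_D_mul μ hμ,
    mul_add P.D (P.potential s) (Real.log (1 + μ / t))]

lemma density_advance_le_one (h : P.IsValid c S L X i s) (hX' : X'.Nonempty)
    (hY'd : #Y' = s.degree)
    (hdeg : ∀ y ∈ X', ((s.degree : ℝ) / #s.pages + μ * (P.excess s / t)) * s.degree ≤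
      #(colourNbhd c i y Y')) :
    (s.degree : ℝ) / #s.pages + μ * (P.excess s / t) ≤ 1 := by
  obtain ⟨y, hy⟩ := hX'
  have hd : (0 : ℝ) < s.degree := Nat.cast_pos.2 h.degree_pos
  refine le_of_mul_le_mul_right ((hdeg y hy).trans ?_) hd
  rw [one_mul, ← hY'd]
  exact Nat.cast_le.2 (card_le_card (colourNbhd_subset _ _ _ _))

lemma correlation_le (h : P.IsValid c S L X i s) (hμ : 0 ≤ μ)
    (hdens : (s.degree : ℝ) / #s.pages + μ * (P.excess s / t) ≤ 1) : μ ≤ 8 * t / P.δ := by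
  have hdens0 : 0 ≤ (s.degree : ℝ) / #s.pages := by positivity
  have hexcess : μ * P.excess s ≤ t := by
    rw [← div_le_one P.t_pos, mul_div_assoc]
    linarith
  rw [le_div_iff₀ P.delta_pos]
  linarith [mul_le_mul_of_nonneg_left h.div_eight_le_excess hμ]

end IsValid

/-- The natural number that decreases in each step of the book algorithm. -/
def rank (t : ℕ) (s : BookState V) : ℕ := #s.pages + (t - #s.spine)

lemma sum_rank_update_lt [Fintype ι] [DecidableEq ι] {s : ι → BookState V} {j : ι}
    {u : BookState V} (h : rank t u < rank t (s j)) :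
    ∑ i, rank t (Function.update s j u i) < ∑ i, rank t (s i) := by
  have := sum_apply_update (fun _ => rank t) s j u
  omega

section Reservoir

variable [Fintype ι] [DecidableEq V] [DecidableEq ι] (P)

/-- The invariants of the book algorithm: the states are valid in all colours, and the reservoir,
initially of size `exp L₀`, has not shrunk by more than the states account for. -/
structure IsAdmissible (c : Sym2 V → ι) (S : Finset V) (L L₀ : ℝ) (X : Finset V)
    (s : ι → BookState V) : Prop where
  subset : X ⊆ S
  isValid : ∀ i, P.IsValid c S L X i (s i)
  le_card : Real.exp (L₀ - ∑ i, P.cost (s i)) ≤ #X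

variable {P} {c : Sym2 V → ι} {S : Finset V} {L L₀ : ℝ} {s : ι → BookState V} {x : V}

namespace IsAdmissible

lemma nonempty (h : P.IsAdmissible c S L L₀ X s) : X.Nonempty :=
  card_pos.1 (Nat.cast_pos.1 ((Real.exp_pos _).trans_le h.le_card))

lemma exp_le_card (h : P.IsAdmissible c S L L₀ X s)
    (hL₀ : Fintype.card ι * (t * P.A + P.maxPotential * P.B) + P.A + 1 ≤ L₀) :
    Real.exp (P.A + 1) ≤ #X := by
  refine (Real.exp_le_exp.2 ?_).trans h.le_card
  have hcost : ∑ i, P.cost (s i) ≤ ∑ _i : ι, (t * P.A + P.maxPotential * P.B) :=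
    sum_le_sum fun i _ => (h.isValid i).cost_le h.nonempty
  rw [sum_const, card_univ, nsmul_eq_mul] at hcost
  linarith

lemma update (h : P.IsAdmissible c S L L₀ X s) (hX' : X' ⊆ X) {j : ι} {u : BookState V}
    (hu : P.IsValid c S L X' j u)
    (hcard : Real.exp (P.cost (s j) - P.cost u) * #X ≤ #X') :
    P.IsAdmissible c S L L₀ X' (Function.update s j u) where
  subset := hX'.trans h.subset
  isValid i := by
    obtain rfl | hij := eq_or_ne i j
    · rwa [Function.update_self]
    · rw [Function.update_of_ne hij]
      exact (h.isValid i).mono hX'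
  le_card := by
    have hsum := sum_apply_update (fun _ => P.cost) s j u
    calc Real.exp (L₀ - ∑ i, P.cost (Function.update s j u i))
        = Real.exp (P.cost (s j) - P.cost u) * Real.exp (L₀ - ∑ i, P.cost (s i)) := by
          rw [← Real.exp_add]
          congr 1
          linarith
      _ ≤ Real.exp (P.cost (s j) - P.cost u) * #X := by gcongr; exact h.le_card
      _ ≤ #X' := hcard

end IsAdmissible

lemma exists_exp_mul_card_le [Nonempty ι] (hX : Real.exp (P.A + 1) ≤ #X)
    (hX' : 2 * Fintype.card ι * (Real.exp (-P.A) * #X) ≤ #X') (c : Sym2 V → ι) (x : V) :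
    ∃ j, Real.exp (-P.A) * #X ≤ #(colourNbhd c j x X') := by
  refine exists_le_card_colourNbhd c x X' (a := fun _ => Real.exp (-P.A) * #X) ?_
  have hr : (1 : ℝ) ≤ Fintype.card ι := Nat.one_le_cast.2 Fintype.card_pos
  have hlarge : 1 ≤ Real.exp (-P.A) * #X :=
    calc (1 : ℝ) ≤ Real.exp 1 := Real.one_le_exp zero_le_one
      _ = Real.exp (-P.A) * Real.exp (P.A + 1) := by rw [← Real.exp_add]; ring_nf
      _ ≤ Real.exp (-P.A) * #X := by gcongr
  rw [sum_const, card_univ, nsmul_eq_mul]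
  nlinarith

namespace IsAdmissible

lemma lengthen {j : ι} (h : P.IsAdmissible c S L L₀ X s) (hs : #(s j).spine < t) (hx : x ∈ X)
    (hX' : X' ⊆ X) (hcard : Real.exp (-P.A) * #X ≤ #(colourNbhd c j x X'))
    (hY' : Y' ⊆ colourNbhd c j x (s j).pages) (hY'd : #Y' = (s j).degree)
    (hdeg : ∀ y ∈ X', (((s j).degree : ℝ) / #(s j).pages - P.excess (s j) / t) * (s j).degree ≤
      #(colourNbhd c j y Y')) :
    P.IsAdmissible c S L L₀ (colourNbhd c j x X')
      (Function.update s j (P.advance (s j) (insert x (s j).spine) Y' (-1))) := by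
  have hsub := colourNbhd_subset c j x X'
  refine h.update (hsub.trans hX') ((h.isValid j).lengthen hs hx (h.subset hx)
    (filter_subset_filter _ hX') hY' hY'd fun y hy => hdeg y (hsub hy)) (le_trans ?_ hcard)
  gcongr
  have hpot := mul_le_mul_of_nonneg_right ((h.isValid j).potential_le_lengthen hx hY'd) P.B_nonneg
  have hspine : (#(P.advance (s j) (insert x (s j).spine) Y' (-1)).spine : ℝ) =
      #(s j).spine + 1 :=
    mod_cast card_insert_of_notMem ((h.isValid j).isBook_reservoir.notMem hx)
  rw [cost, cost, hspine]
  linarith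

lemma rank_lengthen_lt {j : ι} (h : P.IsAdmissible c S L L₀ X s) (hs : #(s j).spine < t)
    (hx : x ∈ X) (hY'd : #Y' = (s j).degree) :
    rank t (P.advance (s j) (insert x (s j).spine) Y' μ) < rank t (s j) := by
  have hd := (h.isValid j).degree_le_card_pages h.nonempty
  have hspine := card_insert_of_notMem ((h.isValid j).isBook_reservoir.notMem hx)
  simp only [rank, advance, hY'd, hspine]
  omega

lemma boost {j : ι} (h : P.IsAdmissible c S L L₀ X s) (hμ : P.Λ ≤ μ) (hX' : X' ⊆ X)
    (hcard : Real.exp (-(P.B * Real.log (1 + μ / t))) * #X ≤ #X')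
    (hY' : Y' ⊆ (s j).pages) (hY'd : #Y' = (s j).degree)
    (hdeg : ∀ y ∈ X', (((s j).degree : ℝ) / #(s j).pages + μ * (P.excess (s j) / t)) *
      (s j).degree ≤ #(colourNbhd c j y Y')) :
    P.IsAdmissible c S L L₀ X' (Function.update s j (P.advance (s j) (s j).spine Y' μ)) := by
  refine h.update hX' ((h.isValid j).boost hμ hX' hY' hY'd hdeg) (le_trans ?_ hcard)
  gcongr
  have hpot := mul_le_mul_of_nonneg_right ((h.isValid j).potential_add_log_le_boost hμ hY'd)
    P.B_nonneg
  rw [cost, cost, show (P.advance (s j) (s j).spine Y' μ).spine = (s j).spine from rfl]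
  linarith

lemma rank_boost_lt {j : ι} (h : P.IsAdmissible c S L L₀ X s) (hμ : 0 < μ)
    (hdens : ((s j).degree : ℝ) / #(s j).pages + μ * (P.excess (s j) / t) ≤ 1)
    (hY'd : #Y' = (s j).degree) :
    rank t (P.advance (s j) (s j).spine Y' μ) < rank t (s j) := by
  have hexcess : 0 < μ * (P.excess (s j) / t) :=
    mul_pos hμ (div_pos (h.isValid j).excess_pos P.t_pos)
  have hlt : (s j).degree < #(s j).pages :=
    Nat.cast_lt.1 ((div_lt_one (h.isValid j).card_pages_pos).1 (by linarith))
  simp only [rank, advance, hY'd]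
  omega

variable [Nonempty ι] {P : BookParameters (Fintype.card ι) t}

lemma exists_rank_lt (h : P.IsAdmissible c S L L₀ X s) (hs : ∀ i, #(s i).spine < t)
    (hL₀ : Fintype.card ι * (t * P.A + P.maxPotential * P.B) + P.A + 1 ≤ L₀) :
    ∃ X' s', P.IsAdmissible c S L L₀ X' s' ∧ ∑ i, rank t (s' i) < ∑ i, rank t (s i) := by
  obtain ⟨x, hx, l, lam, hlam, X', hX'X, Y', hY', hX', hl, hall⟩ :=
    exists_correlated_nbhds c h.nonempty (fun i => (h.isValid i).degree_pos)
      (fun i => (h.isValid i).degree_le) fun i => div_pos (h.isValid i).excess_pos P.t_pos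
  obtain hle | hgt := le_total lam P.Λ
  · have hsize : 2 * Fintype.card ι * (Real.exp (-P.A) * #X) ≤ #X' := by
      refine le_trans ?_ hX'
      have := (le_div_iff₀ (by positivity)).1 (P.exp_neg_A_le lam hlam hle)
      rw [← mul_assoc, mul_comm (2 * _) (Real.exp _)]
      gcongr
    obtain ⟨j, hj⟩ := exists_exp_mul_card_le (h.exp_le_card hL₀) hsize c x
    exact ⟨_, _, h.lengthen (hs j) hx hX'X hj (hY' j).1 (hY' j).2 (hall j),
      sum_rank_update_lt (h.rank_lengthen_lt (hs j) hx (hY' j).2)⟩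
  · have hX'pos : (0 : ℝ) < #X' := by
      have := correlationDensity_pos (r := Fintype.card ι) Fintype.card_pos
      have := h.nonempty.card_pos
      exact hX'.trans_lt' (by positivity)
    have hlam0 := P.threshold_pos.trans_le hgt
    have hdens := (h.isValid l).density_advance_le_one (card_pos.1 (Nat.cast_pos.1 hX'pos))
      (hY' l).2 hl
    have hsize : Real.exp (-(P.B * Real.log (1 + lam / t))) * #X ≤ #X' :=
      (mul_le_mul_of_nonneg_right (P.exp_neg_B_le lam hgt
        ((h.isValid l).correlation_le hlam0.le hdens)) (Nat.cast_nonneg _)).trans hX'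
    exact ⟨_, _, h.boost hgt hX'X hsize ((hY' l).1.trans (colourNbhd_subset _ _ _ _)) (hY' l).2 hl,
      sum_rank_update_lt (h.rank_boost_lt hlam0 hdens (hY' l).2)⟩

lemma exists_isBook (h : P.IsAdmissible c S L L₀ X s)
    (hL₀ : Fintype.card ι * (t * P.A + P.maxPotential * P.B) + P.A + 1 ≤ L₀) :
    ∃ j, ∃ T Y : Finset V, T ⊆ S ∧ Y ⊆ S ∧ #T = t ∧ IsBook c j T Y ∧
      Real.exp (L - P.ell * (t + P.D * P.maxPotential)) ≤ #Y := by
  induction hn : ∑ i, rank t (s i) using Nat.strong_induction_on generalizing X s with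
  | _ n ih =>
    by_cases hs : ∀ i, #(s i).spine < t
    · obtain ⟨X', s', h', hlt⟩ := h.exists_rank_lt hs hL₀
      exact ih _ (hn ▸ hlt) h' rfl
    · push Not at hs
      obtain ⟨j, hj⟩ := hs
      have hv := h.isValid j
      have hcard : #(s j).spine = t := le_antisymm hv.card_spine_le hj
      refine ⟨j, _, _, hv.spine_subset, hv.pages_subset, hcard, hv.isBook_pages,
        (Real.exp_le_exp.2 ?_).trans hv.le_card_pages⟩
      rw [hcard]
      have := mul_le_mul_of_nonneg_left (hv.potential_le h.nonempty) P.D_nonneg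
      linarith [mul_le_mul_of_nonneg_left (add_le_add_right this (t : ℝ)) P.ell_nonneg]

end IsAdmissible

lemma isAdmissible_init (P : BookParameters q t) (hS : S.Nonempty)
    (hdeg : ∀ x ∈ S, ∀ i, P.p * #S ≤ #(colourNbhd c i x S)) :
    P.IsAdmissible c S (Real.log #S) (Real.log #S) S fun _ => ⟨∅, S, ⌈P.p * #S⌉₊⟩ := by
  have hS0 : (0 : ℝ) < #S := Nat.cast_pos.2 hS.card_pos
  have hp : 0 < P.p := P.delta_pos.trans_le P.delta_le
  have hexcess : P.δ ≤ P.excess ⟨∅, S, ⌈P.p * #S⌉₊⟩ := by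
    have : P.p ≤ (⌈P.p * #S⌉₊ : ℝ) / #S := (le_div_iff₀ hS0).2 (Nat.le_ceil _)
    unfold excess
    linarith
  have hpot : 0 ≤ P.potential ⟨∅, S, ⌈P.p * #S⌉₊⟩ := by
    simpa [potential] using Real.log_nonneg ((one_le_div P.delta_pos).2 hexcess)
  have hshrink (z : ℝ) (hz : 0 ≤ z) : Real.exp (Real.log #S - z) ≤ #S := by
    conv_rhs => rw [← Real.exp_log hS0]
    exact Real.exp_le_exp.2 (by linarith)
  refine ⟨Subset.rfl, fun i => ?_, hshrink _ (sum_nonneg fun i _ => ?_)⟩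
  · exact ⟨.empty c i S, .empty c i S, empty_subset _, Subset.rfl, by simp,
      Nat.ceil_pos.2 (by positivity), fun x hx => Nat.ceil_le.2 (hdeg x hx i),
      P.delta_pos.trans_le hexcess, hpot, hshrink _ (mul_nonneg P.ell_nonneg
        (add_nonneg (Nat.cast_nonneg _) (mul_nonneg P.D_nonneg hpot)))⟩
  · exact add_nonneg (mul_nonneg (Nat.cast_nonneg _) P.A_nonneg) (mul_nonneg hpot P.B_nonneg)

theorem exists_isBook [Nonempty ι] (P : BookParameters (Fintype.card ι) t) (hS : S.Nonempty)
    (hdeg : ∀ x ∈ S, ∀ i, P.p * #S ≤ #(colourNbhd c i x S))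
    (hcard : Fintype.card ι * (t * P.A + P.maxPotential * P.B) + P.A + 1 ≤ Real.log #S) :
    ∃ j, ∃ T Y : Finset V, T ⊆ S ∧ Y ⊆ S ∧ #T = t ∧ IsBook c j T Y ∧
      #S * Real.exp (-(P.ell * (t + P.D * P.maxPotential))) ≤ #Y := by
  obtain ⟨j, T, Y, hT, hY, hTt, hTY, hY'⟩ := (P.isAdmissible_init hS hdeg).exists_isBook hcard
  refine ⟨j, T, Y, hT, hY, hTt, hTY, ?_⟩
  rwa [sub_eq_add_neg, Real.exp_add, Real.exp_log (Nat.cast_pos.2 hS.card_pos)] at hY'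

end Reservoir
end BookParameters
end BookAlgorithm

section BookTheorem

lemma sqrt_add_one_le {x : ℝ} (hx : 1 ≤ x) : √(x + 1) ≤ 2 * √x := by
  rw [Real.sqrt_le_left (by positivity), mul_pow, Real.sq_sqrt (by linarith)]
  linarith

lemma sqrt_le_mul_log {s t lam : ℝ} (hs : 0 < s) (ht : 0 < t) (hlo : s ^ 2 ≤ lam)
    (hhi : lam ≤ (t / s) ^ 2) : √lam ≤ 2 * t / s * Real.log (1 + lam / t) := by
  have hlam : 0 < lam := (pow_pos hs 2).trans_le hlo
  obtain hle | hlt := le_total lam t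
  · have hlog := half_le_log_one_add (u := lam / t) (by positivity) ((div_le_one ht).2 hle)
    calc √lam ≤ lam / s := by
          rw [le_div_iff₀ hs]
          calc √lam * s ≤ √lam * √lam := by gcongr; exact Real.le_sqrt_of_sq_le hlo
            _ = lam := Real.mul_self_sqrt hlam.le
      _ = 2 * t / s * (lam / t / 2) := by field_simp
      _ ≤ 2 * t / s * Real.log (1 + lam / t) := by gcongr
  · have hlog : 1 / 2 ≤ Real.log (1 + lam / t) :=
      (half_le_log_one_add zero_le_one le_rfl).trans <|
        Real.log_le_log (by norm_num) (by linarith [(one_le_div ht).2 hlt])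
    calc √lam ≤ t / s := Real.sqrt_le_iff.2 ⟨by positivity, hhi⟩
      _ = 2 * t / s * (1 / 2) := by ring
      _ ≤ 2 * t / s * Real.log (1 + lam / t) := by gcongr

lemma log_inv_correlationDensity_nonneg {q : ℕ} (hq : 0 < q) :
    0 ≤ Real.log (1 / correlationDensity q) :=
  Real.log_nonneg ((one_le_div (correlationDensity_pos hq)).2
    ((correlationDensity_le hq).trans (by norm_num)))

lemma log_div_correlationDensity_nonneg {q : ℕ} (hq : 0 < q) :
    0 ≤ Real.log (2 * q / correlationDensity q) := by
  have : (1 : ℝ) ≤ q := Nat.one_le_cast.2 hq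
  exact Real.log_nonneg ((one_le_div (correlationDensity_pos hq)).2
    (by linarith [correlationDensity_le hq]))

/-- A constant `C` such that correlations of strength `lam ≥ 1` have probability at least
`exp (-C √lam)`. -/
noncomputable def correlationExponent (q : ℕ) : ℝ :=
  Real.log (1 / correlationDensity q) + 2 * correlationRate q

lemma correlationExponent_nonneg {q : ℕ} (hq : 0 < q) : 0 ≤ correlationExponent q :=
  add_nonneg (log_inv_correlationDensity_nonneg hq) (by have := correlationRate_pos hq; positivity)

lemma exp_neg_correlationExponent_le {q : ℕ} (hq : 0 < q) {lam : ℝ} (hlam : 1 ≤ lam) :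
    Real.exp (-(correlationExponent q * √lam)) ≤
      correlationDensity q * Real.exp (-(correlationRate q * √(lam + 1))) := by
  have hβ := correlationDensity_pos hq
  have hlog : correlationDensity q = Real.exp (-Real.log (1 / correlationDensity q)) := by
    rw [one_div, Real.log_inv, neg_neg, Real.exp_log hβ]
  conv_rhs => rw [hlog, ← Real.exp_add]
  refine Real.exp_le_exp.2 ?_
  have hsqrt := mul_le_mul_of_nonneg_left (sqrt_add_one_le hlam) (correlationRate_pos hq).le
  have hone := mul_le_mul_of_nonneg_left (Real.one_le_sqrt.2 hlam)
    (log_inv_correlationDensity_nonneg hq)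
  rw [correlationExponent]
  linarith

/-- The logarithmic cost to the reservoir of lengthening a spine when the correlation threshold
is `Λ`. -/
noncomputable def lengtheningCost (q : ℕ) (Λ : ℝ) : ℝ :=
  correlationRate q * √(Λ + 1) + Real.log (2 * q / correlationDensity q)

lemma lengtheningCost_nonneg {q : ℕ} (hq : 0 < q) (Λ : ℝ) : 0 ≤ lengtheningCost q Λ :=
  add_nonneg (mul_nonneg (correlationRate_pos hq).le (Real.sqrt_nonneg _))
    (log_div_correlationDensity_nonneg hq)

lemma exp_neg_lengtheningCost_le {q : ℕ} (hq : 0 < q) {lam Λ : ℝ} (h : lam ≤ Λ) :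
    Real.exp (-lengtheningCost q Λ) ≤
      correlationDensity q * Real.exp (-(correlationRate q * √(lam + 1))) / (2 * q) := by
  have hβ := correlationDensity_pos hq
  have hC := correlationRate_pos hq
  have heq : Real.exp (-lengtheningCost q Λ) =
      correlationDensity q * Real.exp (-(correlationRate q * √(Λ + 1))) / (2 * q) := by
    rw [lengtheningCost, neg_add, Real.exp_add, Real.exp_neg (Real.log _),
      Real.exp_log (by positivity), inv_div]
    ring
  rw [heq]
  gcongr

variable {q t : ℕ} {v p : ℝ}

lemma neg_log_le_log_two_mul (hp : 1 / (2 * q) ≤ p) (hq : 0 < q) :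
    -Real.log p ≤ Real.log (2 * q) := by
  have hp0 : 0 < p := hp.trans_lt' (by positivity)
  rw [← Real.log_inv]
  refine Real.log_le_log (by positivity) ?_
  rwa [inv_le_comm₀ hp0 (by positivity), ← one_div]

lemma le_sq_div_of_le_div (hq : 0 < q) (hv : 0 < v) (ht : 16 * q * (v ^ 8) ^ 2 ≤ t)
    (hp : 1 / (2 * q) ≤ p) {lam : ℝ} (h : lam ≤ 8 * t / (p / v ^ 8)) : lam ≤ (t / v ^ 4) ^ 2 :=
  calc lam ≤ 8 * t / (p / v ^ 8) := h
    _ ≤ 8 * t / (1 / (2 * q) / v ^ 8) := by gcongr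
    _ = 16 * q * (v ^ 8) ^ 2 * t / v ^ 8 := by field_simp; ring
    _ ≤ t * t / v ^ 8 := by gcongr
    _ = (t / v ^ 4) ^ 2 := by field_simp

/-- The parameters with correlation threshold `v ^ 8` and relative density loss `v ^ (-8)`. -/
noncomputable def bookParameters (hq : 0 < q) (hv : 2 ≤ v) (ht : 16 * q * (v ^ 8) ^ 2 ≤ t)
    (hp : 1 / (2 * q) ≤ p) (hp1 : p ≤ 1) : BookParameters q t :=
  have hv8 : 2 ≤ v ^ 8 := hv.trans (le_self_pow₀ (by linarith) (by norm_num))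
  have hq1 : (1 : ℝ) ≤ q := Nat.one_le_cast.2 hq
  have htv : v ^ 8 ≤ t := by nlinarith
  have ht0 : (0 : ℝ) < t := by linarith
  have hp0 : 0 < p := hp.trans_lt' (by positivity)
  have hδ : p / v ^ 8 ≤ p / 2 := by gcongr
  have hδ0 : 0 < p / v ^ 8 := by positivity
  { p := p
    δ := p / v ^ 8
    ell := -Real.log (p - p / v ^ 8)
    D := 2 * t / v ^ 8
    A := lengtheningCost q (v ^ 8)
    B := correlationExponent q * (2 * t / v ^ 4)
    Λ := v ^ 8
    two_le := Nat.ofNat_le_cast.1 (hv8.trans htv)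
    delta_pos := hδ0
    delta_le := by linarith
    exp_neg_ell_le := by rw [neg_neg, Real.exp_log (by linarith)]
    ell_nonneg := neg_nonneg.2 (Real.log_nonpos (by linarith) (by linarith))
    D_nonneg := by positivity
    A_nonneg := lengtheningCost_nonneg hq _
    B_nonneg := mul_nonneg (correlationExponent_nonneg hq) (by positivity)
    threshold_pos := by linarith
    exp_neg_A_le := fun lam _ h => exp_neg_lengtheningCost_le hq h
    exp_neg_B_le := fun lam h1 h2 => by
      refine le_trans (Real.exp_le_exp.2 (neg_le_neg ?_))
        (exp_neg_correlationExponent_le hq (by linarith))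
      rw [mul_assoc]
      exact mul_le_mul_of_nonneg_left (sqrt_le_mul_log (by positivity) ht0 (by linarith)
        (le_sq_div_of_le_div hq (by linarith) ht hp h2)) (correlationExponent_nonneg hq)
    one_le_D_mul := fun lam h => by
      have hlog := half_le_log_one_add (u := v ^ 8 / t) (by positivity) ((div_le_one ht0).2 htv)
      calc (1 : ℝ) = 2 * t / v ^ 8 * (v ^ 8 / t / 2) := by field_simp
        _ ≤ 2 * t / v ^ 8 * Real.log (1 + v ^ 8 / t) := by gcongr
        _ ≤ 2 * t / v ^ 8 * Real.log (1 + lam / t) := by gcongr }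

variable {q t : ℕ} {v p : ℝ}

section Bounds

variable (hq : 0 < q) (hv : 2 ≤ v) (ht : 16 * q * (v ^ 8) ^ 2 ≤ t) (hp : 1 / (2 * q) ≤ p)
  (hp1 : p ≤ 1)

lemma bookParameters_maxPotential_le_linear :
    (bookParameters hq hv ht hp hp1).maxPotential ≤ Real.log (2 * q) + 8 * v + 2 := by
  have hp0 : 0 < p := hp.trans_lt' (by positivity)
  have hlogv := Real.log_le_sub_one_of_pos (zero_lt_two.trans_le hv)
  have hlogp := neg_log_le_log_two_mul hp hq
  have hlog : Real.log (1 / (p / v ^ 8)) = 8 * Real.log v - Real.log p := by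
    rw [one_div_div, Real.log_div (by positivity) hp0.ne', Real.log_pow, Nat.cast_ofNat]
  simp only [BookParameters.maxPotential, bookParameters, hlog]
  linarith

lemma bookParameters_maxPotential_le_pow :
    (bookParameters hq hv ht hp hp1).maxPotential ≤ (2 * q + 2) * v ^ 8 := by
  have hp0 : 0 < p := hp.trans_lt' (by positivity)
  have hv8 : (1 : ℝ) ≤ v ^ 8 := one_le_pow₀ (by linarith)
  have hlog := Real.log_le_sub_one_of_pos (x := 1 / (p / v ^ 8)) (by positivity)
  have hinv : 1 / (p / v ^ 8) ≤ 2 * q * v ^ 8 :=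
    calc 1 / (p / v ^ 8) ≤ 1 / (1 / (2 * q) / v ^ 8) := by gcongr
      _ = 2 * q * v ^ 8 := by field_simp
  simp only [BookParameters.maxPotential, bookParameters]
  linarith

lemma bookParameters_ell_le :
    (bookParameters hq hv ht hp hp1).ell ≤ -Real.log p + 2 / v ^ 8 := by
  have hp0 : 0 < p := hp.trans_lt' (by positivity)
  have hv8 : (2 : ℝ) ≤ v ^ 8 := hv.trans (le_self_pow₀ (by linarith) (by norm_num))
  have hsmall : 1 / v ^ 8 ≤ 1 / 2 := one_div_le_one_div_of_le two_pos hv8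
  have hlog := neg_two_mul_le_log_one_sub (u := 1 / v ^ 8) (by positivity) hsmall
  have hfactor : p - p / v ^ 8 = p * (1 - 1 / v ^ 8) := by ring
  simp only [bookParameters, hfactor]
  rw [Real.log_mul hp0.ne' (by linarith)]
  rw [mul_one_div] at hlog
  linarith

/-- The reservoir of a book algorithm with `q` colours must number at least
`exp (M t √Λ)`, where `M` is this constant and `Λ` is the correlation threshold. -/
noncomputable def reservoirConstant (q : ℕ) : ℝ :=
  (q + 1) * (2 * correlationRate q + Real.log (2 * q / correlationDensity q)) +
    q * (4 * (q + 1) * correlationExponent q) + 1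

lemma bookParameters_reservoir_le :
    q * (t * (bookParameters hq hv ht hp hp1).A +
      (bookParameters hq hv ht hp hp1).maxPotential * (bookParameters hq hv ht hp hp1).B) +
      (bookParameters hq hv ht hp hp1).A + 1 ≤ t * (reservoirConstant q * v ^ 4) := by
  set P := bookParameters hq hv ht hp hp1
  have hv4 : (1 : ℝ) ≤ v ^ 4 := one_le_pow₀ (by linarith)
  have ht1 : (1 : ℝ) ≤ t := Nat.one_le_cast.2 (Nat.cast_pos.1 P.t_pos)
  have hsqrt : √(v ^ 8 + 1) ≤ 2 * v ^ 4 := by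
    refine (sqrt_add_one_le (one_le_pow₀ (by linarith))).trans_eq ?_
    rw [show v ^ 8 = (v ^ 4) ^ 2 by ring, Real.sqrt_sq (by positivity)]
  have hA : P.A ≤ (2 * correlationRate q + Real.log (2 * q / correlationDensity q)) * v ^ 4 := by
    have h1 := mul_le_mul_of_nonneg_left hsqrt (correlationRate_pos hq).le
    have h2 := mul_le_mul_of_nonneg_left hv4 (log_div_correlationDensity_nonneg hq)
    change lengtheningCost q (v ^ 8) ≤ _
    rw [lengtheningCost]
    linarith
  have hB : P.maxPotential * P.B ≤ 4 * (q + 1) * correlationExponent q * v ^ 4 * t :=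
    calc P.maxPotential * P.B ≤ (2 * q + 2) * v ^ 8 * P.B :=
          mul_le_mul_of_nonneg_right (bookParameters_maxPotential_le_pow ..) P.B_nonneg
      _ = (2 * q + 2) * v ^ 8 * (correlationExponent q * (2 * t / v ^ 4)) := rfl
      _ = 4 * (q + 1) * correlationExponent q * v ^ 4 * t := by field_simp; ring
  have hAt := mul_le_mul_of_nonneg_left hA (zero_le_one.trans ht1)
  have hAt' : P.A ≤ t * P.A := le_mul_of_one_le_left P.A_nonneg ht1
  have h1 : (1 : ℝ) ≤ v ^ 4 * t := one_le_mul_of_one_le_of_one_le hv4 ht1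
  have hqA := mul_le_mul_of_nonneg_left hAt (Nat.cast_nonneg (α := ℝ) q)
  have hqB := mul_le_mul_of_nonneg_left hB (Nat.cast_nonneg (α := ℝ) q)
  rw [reservoirConstant]
  linarith

/-- A constant `E` such that the pages of a book algorithm with `q` colours and correlation
threshold `v ^ 8` lose at most a factor `exp (E t / v ^ 7)` compared to the pages of a random
colouring. -/
noncomputable def pagesConstant (q : ℕ) : ℝ :=
  2 * (Real.log (2 * q) + 1) * (Real.log (2 * q) + 10) + 2

lemma bookParameters_pages_le :
    (bookParameters hq hv ht hp hp1).ell * (t + (bookParameters hq hv ht hp hp1).D *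
      (bookParameters hq hv ht hp hp1).maxPotential) ≤
      -(t * Real.log p) + t * (pagesConstant q / v ^ 7) := by
  set P := bookParameters hq hv ht hp hp1
  have hell : P.ell ≤ -Real.log p + 2 / v ^ 8 := bookParameters_ell_le ..
  set l := Real.log (2 * q)
  have hl0 : 0 ≤ l := Real.log_nonneg (by have : (1 : ℝ) ≤ q := Nat.one_le_cast.2 hq; linarith)
  have hv8 : (2 : ℝ) ≤ v ^ 8 := hv.trans (le_self_pow₀ (by linarith) (by norm_num))
  have hell' : P.ell ≤ l + 1 := by
    have hlogp := neg_log_le_log_two_mul hp hq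
    have : 2 / v ^ 8 ≤ 1 := (div_le_one (by positivity)).2 hv8
    linarith
  have hpot : P.maxPotential ≤ (l + 10) * v := by
    refine (bookParameters_maxPotential_le_linear ..).trans ?_
    nlinarith
  have ht0 := P.t_pos
  have hD := P.D_nonneg
  have hell0 := P.ell_nonneg
  calc P.ell * (t + P.D * P.maxPotential)
      ≤ P.ell * (t + P.D * ((l + 10) * v)) := by gcongr
    _ = P.ell * t + P.ell * (P.D * ((l + 10) * v)) := by ring
    _ ≤ (-Real.log p + 2 / v ^ 8) * t + (l + 1) * (P.D * ((l + 10) * v)) := by gcongr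
    _ = -(t * Real.log p) + t * (2 / v ^ 8) + t * (2 * (l + 1) * (l + 10) / v ^ 7) := by
        rw [show P.D = 2 * t / v ^ 8 from rfl]
        field_simp
    _ ≤ -(t * Real.log p) + t * (2 / v ^ 7) + t * (2 * (l + 1) * (l + 10) / v ^ 7) := by
        gcongr
        · linarith
        · norm_num
    _ = -(t * Real.log p) + t * (pagesConstant q / v ^ 7) := by
        rw [pagesConstant]
        ring

end Bounds

theorem exists_isBook_of_card_colourNbhd {ι : Type*} [Fintype ι] [DecidableEq ι] [Nonempty ι]
    {V : Type*} [DecidableEq V] (hv : 2 ≤ v) (ht : 16 * Fintype.card ι * (v ^ 8) ^ 2 ≤ t)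
    (hp : 1 / (2 * Fintype.card ι) ≤ p) (hp1 : p ≤ 1) (c : Sym2 V → ι) {S : Finset V}
    (hdeg : ∀ x ∈ S, ∀ i, p * #S ≤ #(colourNbhd c i x S))
    (hS : Real.exp (t * (reservoirConstant (Fintype.card ι) * v ^ 4)) ≤ #S) :
    ∃ j, ∃ T Y : Finset V, T ⊆ S ∧ Y ⊆ S ∧ #T = t ∧ IsBook c j T Y ∧
      #S * p ^ t * Real.exp (-(t * (pagesConstant (Fintype.card ι) / v ^ 7))) ≤ #Y := by
  have hr : 0 < Fintype.card ι := Fintype.card_pos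
  have hS0 : (0 : ℝ) < #S := (Real.exp_pos _).trans_le hS
  obtain ⟨j, T, Y, hT, hY, hTt, hTY, hYc⟩ :=
    BookParameters.exists_isBook (bookParameters hr hv ht hp hp1) (card_pos.1 (Nat.cast_pos.1 hS0))
      hdeg ((bookParameters_reservoir_le ..).trans ((Real.le_log_iff_exp_le hS0).2 hS))
  refine ⟨j, T, Y, hT, hY, hTt, hTY, le_trans ?_ hYc⟩
  have hp0 : 0 < p := hp.trans_lt' (by positivity)
  rw [mul_assoc, ← Real.exp_log (pow_pos hp0 t), ← Real.exp_add, Real.log_pow]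
  gcongr
  linarith [bookParameters_pages_le hr hv ht hp hp1]

universe u w

/-- Every colouring with colours `ι` whose colour neighbourhoods have density at least `p` contains
a book with a spine of `t` vertices and almost as many pages as in a random colouring with densities
`p`. A small `τ` means a small loss of pages, at the price of a large coloured set. Vertices live in
universe `w`. -/
def HasLargeBooks (ι : Type u) [Fintype ι] [DecidableEq ι] (κ τ : ℝ) (t₀ : ℕ) : Prop :=
  ∀ {V : Type w} [DecidableEq V] (c : Sym2 V → ι) {S : Finset V} {t : ℕ} {p : ℝ}, t₀ ≤ t →
    1 / (2 * Fintype.card ι) ≤ p → p ≤ 1 → (∀ x ∈ S, ∀ i, p * #S ≤ #(colourNbhd c i x S)) →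
    Real.exp (κ * t / τ) ≤ #S →
    ∃ j, ∃ T Y : Finset V, T ⊆ S ∧ Y ⊆ S ∧ #T = t ∧ IsBook c j T Y ∧
      #S * p ^ t * Real.exp (-(κ * τ * t)) ≤ #Y

theorem exists_hasLargeBooks (ι : Type u) [Fintype ι] [DecidableEq ι] [Nonempty ι] {κ : ℝ}
    (hκ : 0 < κ) : ∃ τ : ℝ, 0 < τ ∧ τ < κ ∧ ∃ t₀, HasLargeBooks.{u, w} ι κ τ t₀ := by
  obtain ⟨v, hv, hM, hE, hτ⟩ : ∃ v : ℝ, 2 ≤ v ∧ reservoirConstant (Fintype.card ι) / κ ≤ v ∧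
      pagesConstant (Fintype.card ι) / κ ≤ v ∧ 1 / κ < v :=
    ((eventually_ge_atTop _).and <| (eventually_ge_atTop _).and <|
      (eventually_ge_atTop _).and (eventually_gt_atTop _)).exists
  rw [div_le_iff₀ hκ] at hM hE
  have hv1 : 1 ≤ v := by linarith
  refine ⟨1 / v ^ 6, by positivity, ?_, ⌈16 * Fintype.card ι * (v ^ 8) ^ 2⌉₊, ?_⟩
  · rw [div_lt_comm₀ (by positivity) hκ]
    exact hτ.trans_le (le_self_pow₀ hv1 (by norm_num))
  intro V _ c S t p ht hp hp1 hdeg hS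
  have hreservoir : t * (reservoirConstant (Fintype.card ι) * v ^ 4) ≤ κ * t / (1 / v ^ 6) :=
    calc t * (reservoirConstant (Fintype.card ι) * v ^ 4) ≤ t * (v * κ * v ^ 4) := by gcongr
      _ = κ * t * v ^ 5 := by ring
      _ ≤ κ * t * v ^ 6 := by gcongr; norm_num
      _ = κ * t / (1 / v ^ 6) := by rw [div_div_eq_mul_div, div_one]
  have hpages : t * (pagesConstant (Fintype.card ι) / v ^ 7) ≤ κ * (1 / v ^ 6) * t :=
    calc t * (pagesConstant (Fintype.card ι) / v ^ 7) ≤ t * (v * κ / v ^ 7) := by gcongr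
      _ = κ * (1 / v ^ 6) * t := by field_simp
  obtain ⟨j, T, Y, hT, hY, hTt, hTY, hYc⟩ :=
    exists_isBook_of_card_colourNbhd hv (Nat.ceil_le.1 ht) hp hp1 c hdeg
      ((Real.exp_le_exp.2 hreservoir).trans hS)
  refine ⟨j, T, Y, hT, hY, hTt, hTY, hYc.trans' ?_⟩
  have : 0 < p := hp.trans_lt' (by positivity)
  gcongr

end BookTheorem

section RamseyBounds

section Logarithm

variable {x : ℝ}

lemma neg_log_one_sub_le (h1 : x ≤ 1 / 2) : -Real.log (1 - x) ≤ x + 2 * x ^ 2 := by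
  have h := Real.one_sub_inv_le_log_of_pos (x := 1 - x) (by linarith)
  have : (1 - x)⁻¹ ≤ 1 + (x + 2 * x ^ 2) := by
    rw [inv_le_iff_one_le_mul₀ (by linarith)]
    nlinarith [mul_nonneg (sq_nonneg x) (by linarith : 0 ≤ 1 - 2 * x)]
  linarith

lemma sub_sq_le_log_one_add (h0 : 0 ≤ x) : x - x ^ 2 ≤ Real.log (1 + x) := by
  have h := Real.one_sub_inv_le_log_of_pos (x := 1 + x) (by linarith)
  have : (1 + x)⁻¹ ≤ 1 - (x - x ^ 2) := by
    rw [inv_le_iff_one_le_mul₀ (by linarith)]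
    nlinarith [pow_nonneg h0 3]
  linarith

lemma tilted_exponent_le {q a N D : ℝ} (hq : 2 ≤ q) (hD0 : 0 ≤ D) (hD1 : D ≤ 1) (ha : 0 ≤ a)
    (hN : 0 ≤ N) (haN : a ≤ (1 - D) * N / q) :
    a * -Real.log (1 - D / 4) + (N - a) * -Real.log (1 + D / 4 / (q - 1)) ≤
      -(D ^ 2 * N / (16 * q)) := by
  obtain ⟨x, rfl⟩ : ∃ x, D = 4 * x := ⟨D / 4, by ring⟩
  rw [mul_div_cancel_left₀ _ four_ne_zero]
  set y := x / (q - 1)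
  have hq1 : 0 < q - 1 := by linarith
  have hx0 : 0 ≤ x := by linarith
  have hy0 : 0 ≤ y := by positivity
  have hxy : (q - 1) * y = x := mul_div_cancel₀ x hq1.ne'
  have hyx : y ≤ x := by nlinarith
  have hqy : q * (y - y ^ 2) = x + y - y * x - y ^ 2 := by linear_combination (1 - y) * hxy
  have hyy : 0 ≤ y - y ^ 2 := by nlinarith
  have haN' : a ≤ N := haN.trans <| (div_le_iff₀ (by linarith)).2 <| by nlinarith
  calc a * -Real.log (1 - x) + (N - a) * -Real.log (1 + y)
      ≤ a * (x + 2 * x ^ 2) + (N - a) * -(y - y ^ 2) := by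
        gcongr
        · exact neg_log_one_sub_le (by linarith)
        · exact sub_sq_le_log_one_add hy0
    _ = a * (x + 2 * x ^ 2 + (y - y ^ 2)) - N * (y - y ^ 2) := by ring
    _ ≤ (1 - 4 * x) * N / q * (x + 2 * x ^ 2 + (y - y ^ 2)) - N * (y - y ^ 2) := by gcongr
    _ = N / q * ((1 - 4 * x) * (x + 2 * x ^ 2 + (y - y ^ 2)) - q * (y - y ^ 2)) := by field_simp
    _ ≤ N / q * -x ^ 2 := by
        gcongr
        rw [hqy]
        nlinarith [mul_nonneg hx0 hyy, mul_nonneg hx0 (sub_nonneg.2 hyx), pow_nonneg hx0 3]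
    _ = -((4 * x) ^ 2 * N / (16 * q)) := by field_simp; norm_num

end Logarithm

variable {ι V : Type*} {c : Sym2 V → ι} {S T Y : Finset V} {k : ι → ℕ} {j : ι} {x : V}

/-- `S` contains a clique of `k i` vertices whose edges all have colour `i`, for some `i`. -/
def HasMonoClique (c : Sym2 V → ι) (S : Finset V) (k : ι → ℕ) : Prop :=
  ∃ i, ∃ A ⊆ S, #A = k i ∧ (A : Set V).Pairwise fun u v => c s(u, v) = i

namespace HasMonoClique

lemma of_eq_zero (h : k j = 0) : HasMonoClique c S k :=
  ⟨j, ∅, empty_subset S, by simp [h], by simp⟩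

lemma of_isBook [DecidableEq ι] (hT : T ⊆ S) (hY : Y ⊆ S) (hTY : IsBook c j T Y)
    (hk : #T ≤ k j) (h : HasMonoClique c Y (Function.update k j (k j - #T))) :
    HasMonoClique c S k := by
  classical
  obtain ⟨i, A, hA, hcard, hclique⟩ := h
  obtain rfl | hij := eq_or_ne i j
  · rw [Function.update_self] at hcard
    refine ⟨i, T ∪ A, union_subset hT (hA.trans hY), ?_, ?_⟩
    · rw [card_union_of_disjoint (disjoint_right.2 fun a ha => hTY.notMem (hA ha)), hcard]
      omega
    · rw [coe_union, Set.pairwise_union]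
      refine ⟨hTY.isClique, hclique, fun v hv y hy _ => ?_⟩
      have hvy := (hTY.join v hv y (hA hy)).2
      exact ⟨hvy, Sym2.eq_swap ▸ hvy⟩
  · rw [Function.update_of_ne hij] at hcard
    exact ⟨i, A, hA.trans hY, hcard, hclique⟩

lemma of_colourNbhd [DecidableEq V] [DecidableEq ι] (hx : x ∈ S) (hk : 0 < k j)
    (h : HasMonoClique c (colourNbhd c j x S) (Function.update k j (k j - 1))) :
    HasMonoClique c S k := by
  refine of_isBook (T := {x}) (singleton_subset_iff.2 hx) (colourNbhd_subset c j x S)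
    ⟨by simp, ?_⟩ hk h
  simp only [mem_singleton, forall_eq]
  exact fun y hy => (mem_filter.1 hy).2

end HasMonoClique

lemma sum_update_sub_mul [Fintype ι] [DecidableEq ι] {R : Type*} [CommRing R] {m : ℕ}
    (h : m ≤ k j) (a : ι → R) :
    ∑ i, (Function.update k j (k j - m) i : R) * a i + m * a j = ∑ i, k i * a i := by
  have hsum := sum_apply_update (fun i (l : ℕ) => (l : R) * a i) k j (k j - m)
  rw [Nat.cast_sub h] at hsum
  linear_combination hsum

lemma sum_update_sub [Fintype ι] [DecidableEq ι] {m : ℕ} (h : m ≤ k j) :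
    ∑ i, Function.update k j (k j - m) i + m = ∑ i, k i := by
  have := sum_update_sub_mul (R := ℤ) h 1
  simp only [Pi.one_apply, mul_one] at this
  exact_mod_cast this

variable [Fintype ι]

local notation "r" => (Fintype.card ι : ℝ)

/-- The weighted Erdős–Szekeres bound `∏ w i ^ (-k i)`: some colour neighbourhood of every vertex
has density at least its weight. -/
lemma hasMonoClique_of_weights (hr : 2 ≤ Fintype.card ι) {w : ι → ℝ} (hw : ∀ i, 0 < w i)
    (hw1 : ∑ i, w i = 1) (hS : 2 * Real.exp (∑ i, k i * -Real.log (w i)) - 1 ≤ #S) :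
    HasMonoClique c S k := by
  classical
  have : Nonempty ι := Fintype.card_pos_iff.1 (by omega)
  induction hn : ∑ i, k i generalizing k S with
  | zero => exact .of_eq_zero (sum_eq_zero_iff.1 hn (Classical.arbitrary ι) (mem_univ _))
  | succ n ih =>
    by_cases h0 : ∃ i, k i = 0
    · exact .of_eq_zero h0.choose_spec
    push Not at h0
    set F := Real.exp (∑ i, k i * -Real.log (w i))
    have hF : 1 ≤ F := Real.one_le_exp <| sum_nonneg fun i _ =>
      mul_nonneg (Nat.cast_nonneg _) <| neg_nonneg.2 <| Real.log_nonpos (hw i).le <|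
        hw1 ▸ single_le_sum (fun j _ => (hw j).le) (mem_univ i)
    obtain ⟨x, hx⟩ : S.Nonempty := card_pos.1 (Nat.cast_pos (α := ℝ).1 (by linarith))
    obtain ⟨j, hj⟩ := exists_le_card_colourNbhd c x S (a := fun i => 2 * (w i * F) - 1) <| by
      have : (2 : ℝ) ≤ r := Nat.ofNat_le_cast.2 hr
      rw [sum_sub_distrib, ← mul_sum, ← sum_mul, hw1, sum_const, card_univ, nsmul_eq_mul]
      linarith
    have hkj : 1 ≤ k j := Nat.one_le_iff_ne_zero.2 (h0 j)
    have hwF : w j * F =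
        Real.exp (∑ i, (Function.update k j (k j - 1) i : ℝ) * -Real.log (w i)) := by
      have := (hw j).ne'
      simp only [F, ← sum_update_sub_mul hkj, Real.exp_add, Nat.cast_one, one_mul, Real.exp_neg,
        Real.exp_log (hw j)]
      field_simp
    refine .of_colourNbhd hx hkj (ih (hwF ▸ hj) ?_)
    have := sum_update_sub hkj
    omega

lemma hasMonoClique_of_exp_le (hr : 2 ≤ Fintype.card ι)
    (hS : 2 * Real.exp ((∑ i, k i : ℕ) * Real.log r) ≤ #S) : HasMonoClique c S k := by
  have hr0 : 0 < r := by positivity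
  refine hasMonoClique_of_weights hr (w := fun _ => r⁻¹) (fun _ => by positivity) ?_ ?_
  · rw [sum_const, card_univ, nsmul_eq_mul, mul_inv_cancel₀ hr0.ne']
  · simp only [Real.log_inv, neg_neg]
    rw [← sum_mul]
    push_cast at hS
    linarith

lemma hasMonoClique_of_le_sub_mul (hr : 2 ≤ Fintype.card ι) {D : ℝ} (hD0 : 0 ≤ D) (hD1 : D ≤ 1)
    {N : ℕ} (hN : ∑ i, k i = N) (hj : k j ≤ (1 - D) * N / r)
    (hS : 2 * Real.exp (N * Real.log r - D ^ 2 * N / (16 * r)) ≤ #S) : HasMonoClique c S k := by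
  classical
  have hr2 : (2 : ℝ) ≤ r := Nat.ofNat_le_cast.2 hr
  have hr1 : 0 < r - 1 := by linarith
  set x := D / 4 with hx
  set y := x / (r - 1)
  have : 0 ≤ y := by positivity
  have hsum (f : ι → ℝ → ℝ) :
      ∑ i, f i (Function.update (fun _ => (1 + y) / r) j ((1 - x) / r) i) =
        ∑ i, f i ((1 + y) / r) + f j ((1 - x) / r) - f j ((1 + y) / r) :=
    eq_sub_of_add_eq (sum_apply_update f (fun _ => (1 + y) / r) j ((1 - x) / r))
  refine hasMonoClique_of_weights hr (w := Function.update (fun _ => (1 + y) / r) j ((1 - x) / r))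
    (fun i => ?_) ?_ ?_
  · obtain rfl | hij := eq_or_ne i j
    · rw [Function.update_self]
      exact div_pos (by linarith) (by linarith)
    · rw [Function.update_of_ne hij]
      positivity
  · have := hsum fun _ => id
    simp only [id, sum_const, card_univ, nsmul_eq_mul] at this
    rw [this]
    simp only [y]
    field_simp
    ring
  · rw [hsum fun i z => (k i : ℝ) * -Real.log z, ← sum_mul, ← Nat.cast_sum, hN,
      Real.log_div (by positivity) (by positivity), Real.log_div (by linarith) (by positivity)]
    refine (sub_le_self _ zero_le_one).trans (hS.trans' ?_)
    refine mul_le_mul_of_nonneg_left (Real.exp_le_exp.2 ?_) zero_le_two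
    linarith [tilted_exponent_le hr2 hD0 hD1 (Nat.cast_nonneg (k j)) (Nat.cast_nonneg N) hj]

end RamseyBounds

section GreedyReduction

variable {ι V : Type*} [Fintype ι] {c : Sym2 V → ι} {S : Finset V} {k : ι → ℕ} {j : ι} {x : V}

/-- The problem of finding a clique of one of the sizes `k` in `S` has been reduced, by passing `s`
times to a colour neighbourhood, to the problem of finding one of the sizes `k'` in `S'`. -/
structure IsReduction (c : Sym2 V → ι) (S : Finset V) (k : ι → ℕ) (s : ℕ) (S' : Finset V)
    (k' : ι → ℕ) : Prop where
  sum_add : ∑ i, k' i + s = ∑ i, k i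
  le : k' ≤ k
  hasMonoClique : HasMonoClique c S' k' → HasMonoClique c S k

namespace IsReduction

variable {s : ℕ} {S' : Finset V} {k' : ι → ℕ}

lemma refl : IsReduction c S k 0 S k :=
  ⟨add_zero _, le_rfl, id⟩

lemma le_add (h : IsReduction c S k s S' k') (i : ι) : k i ≤ k' i + s := by
  have := single_le_sum (f := fun i => k i - k' i) (fun _ _ => Nat.zero_le _) (mem_univ i)
  have hsum := sum_tsub_distrib univ (f := k) (g := k') fun i _ => h.le i
  have := h.sum_add
  omega

lemma of_colourNbhd [DecidableEq ι] [DecidableEq V] (hx : x ∈ S) (hk : 1 ≤ k j)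
    (h : IsReduction c (colourNbhd c j x S) (Function.update k j (k j - 1)) s S' k') :
    IsReduction c S k (s + 1) S' k' where
  sum_add := by rw [← add_assoc, h.sum_add, sum_update_sub hk]
  le := h.le.trans (update_le_self_iff.2 (Nat.sub_le _ _))
  hasMonoClique h' := .of_colourNbhd hx hk (h.hasMonoClique h')

end IsReduction

variable [DecidableEq ι] [DecidableEq V]

local notation "r" => (Fintype.card ι : ℝ)

lemma exists_le_card_colourNbhd_of_lt {ε : ℝ} (hε : 0 < ε) (hS : r ^ 2 / ε ≤ #S) {i : ι}
    (hi : #(colourNbhd c i x S) < (1 - ε) / r * #S) :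
    ∃ j, #S * ((1 + ε / r) / r) ≤ #(colourNbhd c j x S) := by
  have : Nonempty ι := ⟨i⟩
  have : 0 < r := by positivity
  set a := #S * ((1 + ε / r) / r)
  obtain ⟨j, hj⟩ := exists_le_card_colourNbhd c x S
    (a := Function.update (fun _ => a) i ((1 - ε) / r * #S)) <| by
      have hsum := sum_apply_update (fun _ => id) (fun _ => a) i ((1 - ε) / r * #S)
      simp only [id, sum_const, card_univ, nsmul_eq_mul] at hsum
      have hloss : r * a + (1 - ε) / r * #S - a = #S - #S * ε / r ^ 2 := by
        simp only [a]
        field_simp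
        ring
      have : 1 ≤ #S * ε / r ^ 2 := by
        rwa [one_le_div (by positivity), ← div_le_iff₀ hε]
      linarith
  obtain rfl | hij := eq_or_ne j i
  · rw [Function.update_self] at hj
    exact absurd hi hj.not_gt
  · rw [Function.update_of_ne hij] at hj
    exact ⟨j, hj⟩

lemma exists_isReduction {ε : ℝ} (hε : 0 < ε) {M : ℕ} (hk : ∀ i, M ≤ k i)
    (hS : r ^ 2 / ε * r ^ M ≤ #S) :
    ∃ s ≤ M, ∃ S' k', IsReduction c S k s S' k' ∧ #S * ((1 + ε / r) / r) ^ s ≤ #S' ∧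
      (s = M ∨ ∀ x ∈ S', ∀ i, (1 - ε) / r * #S' ≤ #(colourNbhd c i x S')) := by
  induction M generalizing S k with
  | zero => exact ⟨0, le_rfl, S, k, .refl, by simp, .inl rfl⟩
  | succ M ih =>
    by_cases! hmin : ∀ x ∈ S, ∀ i, (1 - ε) / r * #S ≤ #(colourNbhd c i x S)
    · exact ⟨0, Nat.zero_le _, S, k, .refl, by simp, .inr hmin⟩
    obtain ⟨x, hx, i, hi⟩ := hmin
    have hr1 : 1 ≤ r := Nat.one_le_cast.2 (Fintype.card_pos_iff.2 ⟨i⟩)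
    obtain ⟨j, hj⟩ := exists_le_card_colourNbhd_of_lt hε
      (hS.trans' (le_mul_of_one_le_right (by positivity) (one_le_pow₀ hr1))) hi
    have hk' (i : ι) : M ≤ Function.update k j (k j - 1) i := by
      have := hk i
      obtain rfl | hij := eq_or_ne i j
      · rw [Function.update_self]
        omega
      · rw [Function.update_of_ne hij]
        omega
    have hS' : r ^ 2 / ε * r ^ M ≤ #(colourNbhd c j x S) :=
      calc r ^ 2 / ε * r ^ M = r ^ 2 / ε * r ^ (M + 1) * (1 / r) := by
            rw [pow_succ _ M]
            field_simp
        _ ≤ #S * ((1 + ε / r) / r) := by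
            gcongr
            exact le_add_of_nonneg_right (by positivity)
        _ ≤ #(colourNbhd c j x S) := hj
    obtain ⟨s, hs, S', k', hred, hcard, hor⟩ := ih hk' hS'
    refine ⟨s + 1, by omega, S', k', hred.of_colourNbhd hx (by have := hk j; omega),
      hcard.trans' ?_, hor.imp_left (congr_arg (· + 1))⟩
    rw [pow_succ', ← mul_assoc]
    gcongr

end GreedyReduction

section OfflineImprovement

universe u w

variable {ι : Type u} {V : Type w} [Fintype ι] [DecidableEq ι] {c : Sym2 V → ι}
  {S Y : Finset V} {k : ι → ℕ} {j : ι} {τ K : ℝ}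

local notation "r" => (Fintype.card ι : ℝ)

lemma half_le_log {x : ℝ} (hx : 2 ≤ x) : 1 / 2 ≤ Real.log x := by
  have := Real.log_two_gt_d9
  have := Real.log_le_log two_pos hx
  linarith

lemma two_mul_exp_le {a b x : ℝ} (h : 1 + a ≤ b) (hb : Real.exp b ≤ x) : 2 * Real.exp a ≤ x := by
  have h2 : 2 ≤ Real.exp 1 := by linarith [Real.add_one_le_exp (1 : ℝ)]
  calc 2 * Real.exp a ≤ Real.exp 1 * Real.exp a := by gcongr
    _ = Real.exp (1 + a) := (Real.exp_add _ _).symm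
    _ ≤ x := (Real.exp_le_exp.2 h).trans hb

/-- A spine of `t` vertices of colour `j` leaves an unbalanced problem for the pages. -/
lemma hasMonoClique_update_sub (hr : 2 ≤ Fintype.card ι) (hτ0 : 0 < τ) (hτ1 : τ ≤ 1 / 4096)
    (hk : (∑ i, k i : ℕ) = r * K) (hup : k j ≤ (1 + τ / 8) * K) (hK : 4096 ≤ τ ^ 2 * K) {t : ℕ}
    (htk : t ≤ k j) (ht : τ * K ≤ t) (ht' : t ≤ 2 * (τ * K))
    (hY : Real.exp (r * K * Real.log r - τ ^ 2 * K / 4096 +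
      t * (Real.log (1 - τ / 4096) - Real.log r) - 1 / 4096 * τ * t) ≤ #Y) :
    HasMonoClique c Y (Function.update k j (k j - t)) := by
  have hr2 : (2 : ℝ) ≤ r := Nat.ofNat_le_cast.2 hr
  have hK0 : 0 < K := by
    by_contra! h
    nlinarith
  set N := ∑ i, Function.update k j (k j - t) i with hN
  have hNt : (N : ℝ) = r * K - t := by
    rw [← hk, ← sum_update_sub htk, Nat.cast_add, add_sub_cancel_right]
  have htr : t / r ≤ t / 2 := by gcongr
  have hτK := mul_le_mul_of_nonneg_right hτ1 hK0.le
  refine hasMonoClique_of_le_sub_mul hr (D := τ / 4) (by positivity) (by linarith) rfl (j := j)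
    ?_ (two_mul_exp_le ?_ hY)
  · have htr0 : 0 ≤ τ / 4 * (t / r) := by positivity
    rw [← hN, hNt, Function.update_self, Nat.cast_sub htk,
      show (1 - τ / 4) * (r * K - t) / r = (1 - τ / 4) * (K - t / r) by field_simp]
    linarith
  · have hgain : τ ^ 2 * K / 512 ≤ (τ / 4) ^ 2 * N / (16 * r) :=
      calc τ ^ 2 * K / 512 = (τ / 4) ^ 2 * (r * K / 2) / (16 * r) := by field_simp; norm_num
        _ ≤ (τ / 4) ^ 2 * N / (16 * r) := by
          have := mul_le_mul_of_nonneg_right hr2 hK0.le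
          gcongr
          linarith
    have hlog := neg_two_mul_le_log_one_sub (u := τ / 4096) (by positivity) (by linarith)
    have hloss := mul_le_mul_of_nonneg_left hlog (Nat.cast_nonneg (α := ℝ) t)
    have ht'' := mul_le_mul_of_nonneg_left ht' hτ0.le
    rw [← hN, hNt]
    rw [hNt] at hgain
    linarith

lemma HasLargeBooks.hasMonoClique [DecidableEq V] {t₀ : ℕ}
    (hbook : HasLargeBooks.{u, w} ι (1 / 4096) τ t₀)
    (hr : 2 ≤ Fintype.card ι) (hτ0 : 0 < τ) (hτ1 : τ ≤ 1 / 4096) (ht₀ : t₀ ≤ τ * K)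
    (hK : 4096 ≤ τ ^ 2 * K) (hk : (∑ i, k i : ℕ) = r * K) (hlow : ∀ i, K / 2 ≤ k i)
    (hup : ∀ i, k i ≤ (1 + τ / 8) * K)
    (hS : Real.exp (r * K * Real.log r - τ ^ 2 * K / 4096) ≤ #S)
    (hdeg : ∀ x ∈ S, ∀ i, (1 - τ / 4096) / r * #S ≤ #(colourNbhd c i x S)) :
    HasMonoClique c S k := by
  have hr2 : (2 : ℝ) ≤ r := Nat.ofNat_le_cast.2 hr
  have hK0 : 0 < K := by
    by_contra! h
    nlinarith
  have hτK : 1 ≤ τ * K := by nlinarith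
  set t := ⌈τ * K⌉₊
  have ht : τ * K ≤ t := Nat.le_ceil _
  have ht' : t ≤ 2 * (τ * K) := by linarith [Nat.ceil_lt_add_one (zero_le_one.trans hτK)]
  have hp : 1 / (2 * r) ≤ (1 - τ / 4096) / r := by
    rw [← div_div]
    gcongr
    linarith
  have hp0 : 0 < (1 - τ / 4096) / r := hp.trans_lt' (by positivity)
  have hp1 : (1 - τ / 4096) / r ≤ 1 := (div_le_one (by linarith)).2 (by linarith)
  have hsize : 1 / 4096 * t / τ ≤ r * K * Real.log r - τ ^ 2 * K / 4096 := by
    have h1 : 1 / 4096 * t / τ ≤ K / 2048 := by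
      rw [div_le_iff₀ hτ0]
      linarith
    have h2 : K * 1 ≤ K * (r * Real.log r) := by
      gcongr
      nlinarith [half_le_log hr2]
    have h3 : τ ^ 2 * K ≤ 1 * K := by
      gcongr
      nlinarith
    linarith
  obtain ⟨j, T, Y, hT, hY, hTt, hTY, hYc⟩ := hbook c (Nat.cast_le.1 (ht₀.trans ht)) hp hp1 hdeg
    ((Real.exp_le_exp.2 hsize).trans hS)
  have htk : t ≤ k j := by
    have := mul_le_mul_of_nonneg_right hτ1 hK0.le
    exact Nat.cast_le.1 ((by linarith : (t : ℝ) ≤ K / 2).trans (hlow j))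
  refine .of_isBook hT hY hTY (hTt ▸ htk) ?_
  rw [hTt]
  refine hasMonoClique_update_sub hr hτ0 hτ1 hk (hup j) hK htk ht ht' (hYc.trans' ?_)
  rw [sub_eq_add_neg _ (1 / 4096 * τ * t), Real.exp_add, Real.exp_add,
    ← Real.log_div (by linarith) (by linarith), ← Real.log_pow, Real.exp_log (pow_pos hp0 t)]
  gcongr

end OfflineImprovement

section ReducedProblem

universe u w

variable {ι : Type u} {V : Type w} [Fintype ι] {c : Sym2 V → ι} {S S' : Finset V} {k k' : ι → ℕ}
  {s : ℕ} {b u η τ K : ℝ}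

local notation "r" => (Fintype.card ι : ℝ)

lemma IsReduction.exp_le_card (h : IsReduction c S k s S' k') (hr : 0 < r)
    (hS : Real.exp ((∑ i, k i : ℕ) * Real.log r - b) ≤ #S) (hu : 0 ≤ u)
    (hcard : #S * ((1 + u) / r) ^ s ≤ #S') :
    Real.exp ((∑ i, k' i : ℕ) * Real.log r - b + s * Real.log (1 + u)) ≤ #S' := by
  have hsplit : (∑ i, k' i : ℕ) * Real.log r - b + s * Real.log (1 + u) =
      (∑ i, k i : ℕ) * Real.log r - b + s * (Real.log (1 + u) - Real.log r) := by
    rw [← h.sum_add, Nat.cast_add]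
    ring
  have hpow : Real.exp (s * (Real.log (1 + u) - Real.log r)) = ((1 + u) / r) ^ s := by
    rw [Real.exp_nat_mul, Real.exp_sub, Real.exp_log (by linarith), Real.exp_log hr]
  rw [hsplit, Real.exp_add, hpow]
  exact hcard.trans' (by gcongr)

lemma le_one_add_mul_of_forall_le (hk : (∑ i, k i : ℕ) = r * K) (hlow : ∀ i, (1 - η) * K ≤ k i)
    (i : ι) : k i ≤ (1 + (r - 1) * η) * K := by
  classical
  have hsum := sum_apply_update (fun _ => id) (fun i => (k i : ℝ)) i ((1 - η) * K)
  have hle : ∑ _i : ι, (1 - η) * K ≤ ∑ j, Function.update (fun i => (k i : ℝ)) i ((1 - η) * K) j :=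
    sum_le_sum fun j _ => by
      obtain rfl | hij := eq_or_ne j i
      · rw [Function.update_self]
      · rw [Function.update_of_ne hij]
        exact hlow j
  simp only [id, sum_const, card_univ, nsmul_eq_mul] at hsum hle
  push_cast at hk
  linarith

lemma IsReduction.hasMonoClique_of_hasLargeBooks [DecidableEq ι] [DecidableEq V] {t₀ : ℕ}
    (h : IsReduction c S k s S' k') (hbook : HasLargeBooks.{u, w} ι (1 / 4096) τ t₀)
    (hr : 2 ≤ Fintype.card ι) (hη : 8 * r * η = τ) (hη0 : 0 < η) (hτ1 : τ ≤ 1 / 4096)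
    (ht₀ : t₀ ≤ τ * K / 2) (hK : 4096 ≤ η ^ 2 * K) (hk : (∑ i, k i : ℕ) = r * K)
    (hlow : ∀ i, (1 - η) * K ≤ k i) (hs : s ≤ η * K)
    (hS' : Real.exp ((∑ i, k' i : ℕ) * Real.log r - η ^ 2 * K / 4096) ≤ #S')
    (hdeg : ∀ x ∈ S', ∀ i, (1 - τ / 4096) / r * #S' ≤ #(colourNbhd c i x S')) :
    HasMonoClique c S k := by
  have hr2 : (2 : ℝ) ≤ r := Nat.ofNat_le_cast.2 hr
  have hK0 : 0 < K := by
    by_contra! hK0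
    nlinarith
  have hτ : 16 * η ≤ τ := by nlinarith
  have hτ0 : 0 < τ := by linarith
  have hk' : (∑ i, k' i : ℕ) = r * (K - s / r) := by
    rw [mul_sub, mul_div_cancel₀ _ (by positivity), ← hk, ← h.sum_add, Nat.cast_add,
      add_sub_cancel_right]
  have hK' : (1 - η / 2) * K ≤ K - s / r := by
    have : s / r ≤ η * K / 2 := by gcongr
    linarith
  have hηK : η * K ≤ 1 / 65536 * K := by
    gcongr
    linarith
  have hK'' : K / 2 ≤ K - s / r := by linarith
  have hητ : η ^ 2 * K ≤ τ ^ 2 * (K - s / r) :=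
    calc η ^ 2 * K ≤ 128 * (η ^ 2 * K) := by linarith
      _ = (16 * η) ^ 2 * (K / 2) := by ring
      _ ≤ τ ^ 2 * (K - s / r) := by gcongr
  refine h.hasMonoClique <| hbook.hasMonoClique hr hτ0 hτ1 (K := K - s / r) ?_ (hK.trans hητ)
    hk' (fun i => ?_) (fun i => ?_) (hS'.trans' (Real.exp_le_exp.2 ?_)) hdeg
  · have := mul_le_mul_of_nonneg_left hK'' hτ0.le
    linarith
  · have hki : (k i : ℝ) ≤ k' i + s := mod_cast h.le_add i
    have hsr : 0 ≤ s / r := by positivity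
    linarith [hlow i]
  · calc (k' i : ℝ) ≤ k i := Nat.cast_le.2 (h.le i)
      _ ≤ (1 + (r - 1) * η) * K := le_one_add_mul_of_forall_le hk hlow i
      _ ≤ (1 + r * η) * ((1 - η / 2) * K) := by
        have : r * η * (η * K) ≤ 1 * (η * K) := by
          gcongr
          linarith
        linarith
      _ ≤ (1 + τ / 8) * (K - s / r) := by
        rw [← hη, show 8 * r * η / 8 = r * η by ring]
        gcongr
  · rw [hk']
    linarith

lemma IsReduction.hasMonoClique_of_gain (h : IsReduction c S k s S' k')
    (hr : 2 ≤ Fintype.card ι) (hη0 : 0 < η) (hη1 : η ≤ 1) (hK : 4096 ≤ η ^ 2 * K)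
    (hs : η * K / 2 ≤ s)
    (hS : Real.exp ((∑ i, k i : ℕ) * Real.log r - η ^ 2 * K / 4096) ≤ #S)
    (hcard : #S * ((1 + η / 512) / r) ^ s ≤ #S') : HasMonoClique c S k := by
  have hgain : η ^ 2 * K / 2048 ≤ s * Real.log (1 + η / 512) :=
    calc η ^ 2 * K / 2048 = η * K / 2 * (η / 512 / 2) := by ring
      _ ≤ s * Real.log (1 + η / 512) := by
        gcongr
        exact half_le_log_one_add (by positivity) (by linarith)
  refine h.hasMonoClique <| hasMonoClique_of_exp_le hr <| two_mul_exp_le ?_ <|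
    h.exp_le_card (by positivity) hS (by positivity) hcard
  linarith

lemma mul_pow_le_exp {a x : ℝ} {M : ℕ} (hx : 2 ≤ x) (ha : 0 < a) (haK : 4 * Real.log a ≤ x * K)
    (hK : 0 ≤ K) (hη0 : 0 ≤ η) (hη1 : η ≤ 1) (hM : M ≤ K / 4) :
    a * x ^ M ≤ Real.exp (x * K * Real.log x - η ^ 2 * K / 4096) := by
  have hlog := half_le_log hx
  rw [← Real.log_le_iff_le_exp (by positivity), Real.log_mul ha.ne' (by positivity), Real.log_pow]
  have hηK : η ^ 2 * K ≤ 1 * K := by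
    gcongr
    exact pow_le_one₀ hη0 hη1
  have hMK : M * Real.log x ≤ K / 4 * Real.log x := by gcongr
  have hxK : x * K * (1 / 2) ≤ x * K * Real.log x := by gcongr
  have hKK : 2 * K * Real.log x ≤ x * K * Real.log x := by gcongr
  have hK2 : K * (1 / 2) ≤ K * Real.log x := by gcongr
  linarith

lemma HasLargeBooks.hasMonoClique_of_balanced [DecidableEq ι] {t₀ : ℕ}
    (hbook : HasLargeBooks.{u, w} ι (1 / 4096) τ t₀) (hr : 2 ≤ Fintype.card ι)
    (hη : 8 * r * η = τ) (hη0 : 0 < η) (hτ1 : τ ≤ 1 / 4096) (ht₀ : t₀ ≤ τ * K / 2)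
    (hK : 4096 ≤ η ^ 2 * K) (hG : 4 * Real.log (r ^ 2 / (τ / 4096)) ≤ r * K)
    (hk : (∑ i, k i : ℕ) = r * K) (hlow : ∀ i, (1 - η) * K ≤ k i)
    (hS : Real.exp (r * K * Real.log r - η ^ 2 * K / 4096) ≤ #S) : HasMonoClique c S k := by
  classical
  have hr2 : (2 : ℝ) ≤ r := Nat.ofNat_le_cast.2 hr
  have hη1 : η ≤ 1 / 65536 := by nlinarith
  have hτ0 : 0 < τ := by rw [← hη]; positivity
  have hK0 : 0 < K := by
    by_contra! hK0
    nlinarith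
  have hηK : η * K ≤ 1 / 65536 * K := by gcongr
  have hηK1 : 1 ≤ η * K := by nlinarith
  set M := ⌊η * K⌋₊
  have hM : M ≤ η * K := Nat.floor_le (by positivity)
  have hM1 : (1 : ℝ) ≤ M := Nat.one_le_cast.2 ((Nat.one_le_floor_iff _).2 hηK1)
  have hMk (i : ι) : M ≤ k i := Nat.cast_le.1 (hM.trans ((hlow i).trans' (by linarith)))
  have hsize : r ^ 2 / (τ / 4096) * r ^ M ≤ #S :=
    hS.trans' <| mul_pow_le_exp hr2 (by positivity) hG hK0.le hη0.le (by linarith) (by linarith)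
  obtain ⟨s, hs, S', k', hred, hcard, rfl | hdeg⟩ :=
    exists_isReduction (c := c) (ε := τ / 4096) (by positivity) hMk hsize
  · rw [show τ / 4096 / r = η / 512 by rw [← hη]; field_simp; norm_num] at hcard
    refine hred.hasMonoClique_of_gain hr hη0 (by linarith) hK ?_ (hk ▸ hS) hcard
    linarith [Nat.lt_floor_add_one (η * K), hM1]
  · have hs' : s ≤ η * K := hM.trans' (Nat.cast_le.2 hs)
    refine hred.hasMonoClique_of_hasLargeBooks hbook hr hη hη0 hτ1 ht₀ hK hk hlow hs' ?_ hdeg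
    refine (hred.exp_le_card (by positivity) (hk ▸ hS) (by positivity) hcard).trans' ?_
    have hu : 0 ≤ τ / 4096 / r := by positivity
    have := Real.log_nonneg (le_add_of_nonneg_right hu)
    gcongr
    exact le_add_of_nonneg_right (by positivity)

lemma hasMonoClique_of_le_one_sub_mul (hr : 2 ≤ Fintype.card ι) {i : ι} (hη0 : 0 < η) (hη1 : η ≤ 1)
    (hK : 4096 ≤ η ^ 2 * K) (hk : (∑ i, k i : ℕ) = r * K) (hi : k i ≤ (1 - η) * K)
    (hS : Real.exp (r * K * Real.log r - η ^ 2 * K / 4096) ≤ #S) : HasMonoClique c S k := by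
  have hr0 : 0 < r := by positivity
  refine hasMonoClique_of_le_sub_mul hr hη0.le hη1 rfl (j := i) ?_
    (two_mul_exp_le ?_ hS)
  · rw [hk]
    rwa [mul_left_comm, mul_div_cancel_left₀ _ hr0.ne']
  · rw [hk, show η ^ 2 * (r * K) / (16 * r) = η ^ 2 * K / 16 by field_simp]
    linarith

variable (ι) in
theorem exists_hasMonoClique_of_exp_le (hr : 2 ≤ Fintype.card ι) :
    ∃ δ : ℝ, 0 < δ ∧ δ ≤ 1 ∧ ∃ N₀ : ℕ, ∀ {V : Type w} (c : Sym2 V → ι)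
      {S : Finset V} {k : ι → ℕ}, N₀ ≤ ∑ i, k i →
      Real.exp ((1 - δ) * ((∑ i, k i : ℕ) * Real.log r)) ≤ #S → HasMonoClique c S k := by
  classical
  have hr2 : (2 : ℝ) ≤ r := Nat.ofNat_le_cast.2 hr
  have hlog := half_le_log hr2
  have : Nonempty ι := Fintype.card_pos_iff.1 (by omega)
  obtain ⟨τ, hτ0, hτ1, t₀, hbook⟩ := exists_hasLargeBooks.{u, w} ι (κ := 1 / 4096) (by norm_num)
  set η := τ / (8 * r) with hη
  have hη0 : 0 < η := by positivity
  have hη1 : η ≤ 1 := (div_le_one (by positivity)).2 (by linarith)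
  have hlarge : ∀ᶠ N : ℕ in atTop, 4096 ≤ η ^ 2 * (N / r) ∧ t₀ ≤ τ * (N / r) / 2 ∧
      4 * Real.log (r ^ 2 / (τ / 4096)) ≤ N := by
    have hN : Tendsto (fun N : ℕ => (N / r : ℝ)) atTop atTop :=
      tendsto_natCast_atTop_atTop.atTop_div_const (by positivity)
    exact ((hN.const_mul_atTop (by positivity)).eventually_ge_atTop _).and <|
      (((hN.const_mul_atTop hτ0).atTop_div_const two_pos).eventually_ge_atTop _).and <|
        tendsto_natCast_atTop_atTop.eventually_ge_atTop _
  obtain ⟨N₀, hN₀⟩ := eventually_atTop.1 hlarge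
  refine ⟨η ^ 2 / 4096 / (r * Real.log r), by positivity, ?_, N₀, fun {V} c S k hk hS => ?_⟩
  · rw [div_le_iff₀ (by positivity)]
    nlinarith
  obtain ⟨hK, ht₀, hG⟩ := hN₀ _ hk
  have hN : (∑ i, k i : ℕ) = r * ((∑ i, k i : ℕ) / r) := by field_simp
  have hS' : Real.exp (r * ((∑ i, k i : ℕ) / r) * Real.log r -
      η ^ 2 * ((∑ i, k i : ℕ) / r) / 4096) ≤ #S := by
    convert hS using 2
    field_simp
  by_cases! hlow : ∀ i, (1 - η) * ((∑ i, k i : ℕ) / r) ≤ k i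
  · exact hbook.hasMonoClique_of_balanced hr (by rw [hη]; field_simp) hη0 hτ1.le ht₀ hK
      (hN ▸ hG) hN hlow hS'
  · obtain ⟨i, hi⟩ := hlow
    exact hasMonoClique_of_le_one_sub_mul hr hη0 hη1 hK hN hi.le hS'

end ReducedProblem

section Game

variable {q : ℕ} {W : History q → Prop} {h : History q} {m n : ℕ}

/-- From the history `h`, Builder can reach a history satisfying `W` within `n` more rounds. -/
inductive CanForce (W : History q → Prop) : ℕ → History q → Prop
  | of_win {n : ℕ} {h : History q} : W h → CanForce W n h
  | present {n : ℕ} {h : History q} (e : Sym2 ℕ) (he : ¬ e.IsDiag ∧ e ∉ h.map Prod.fst)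
      (next : ∀ i, CanForce W n (h ++ [(e, i)])) : CanForce W (n + 1) h

namespace CanForce

lemma mono (hmn : m ≤ n) (hm : CanForce W m h) : CanForce W n h := by
  induction hm generalizing n with
  | of_win hW => exact .of_win hW
  | present e he _ ih =>
    obtain _ | n := n
    · exact absurd hmn (Nat.not_succ_le_zero _)
    · exact .present e he fun i => ih i (Nat.le_of_succ_le_succ hmn)

lemma win_or_exists_present (hn : CanForce W n h) : W h ∨ ∃ m < n, ∃ e : Sym2 ℕ,
    (¬ e.IsDiag ∧ e ∉ h.map Prod.fst) ∧ ∀ i, CanForce W m (h ++ [(e, i)]) := by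
  cases hn with
  | of_win hW => exact .inl hW
  | @present m _ e he next => exact .inr ⟨m, m.lt_succ_self, e, he, next⟩

end CanForce

lemma exists_new_edge (h : History q) : ∃ e : Sym2 ℕ, ¬ e.IsDiag ∧ e ∉ h.map Prod.fst := by
  have hinj : Function.Injective fun k : ℕ => s(0, k + 1) := fun a b hab => by simpa using hab
  obtain ⟨_, ⟨k, rfl⟩, hk⟩ :=
    (Set.infinite_range_of_injective hinj).exists_notMem_finset (h.map Prod.fst).toFinset
  exact ⟨s(0, k + 1), by simp, by simpa using hk⟩

lemma exists_best_edge (W : History q → Prop) (h : History q) :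
    ∃ e : Sym2 ℕ, (¬ e.IsDiag ∧ e ∉ h.map Prod.fst) ∧
      ∀ n, CanForce W n h → W h ∨ ∃ m < n, ∀ i, CanForce W m (h ++ [(e, i)]) := by
  classical
  obtain ⟨e₀, he₀⟩ := exists_new_edge h
  by_cases hforce : ∃ n, CanForce W n h
  · obtain hW | ⟨m, hm, e, he, next⟩ := (Nat.find_spec hforce).win_or_exists_present
    · exact ⟨e₀, he₀, fun _ _ => .inl hW⟩
    · exact ⟨e, he, fun n hn => .inr ⟨m, hm.trans_le (Nat.find_min' hforce hn), next⟩⟩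
  · exact ⟨e₀, he₀, fun n hn => absurd ⟨n, hn⟩ hforce⟩

lemma exists_validBuilder_of_canForce (W : History q → Prop) :
    ∃ B : History q → Sym2 ℕ, validBuilder B ∧ ∀ (P : History q → Sym2 ℕ → Fin q) (N n₀ : ℕ),
      CanForce W N (play B P n₀) → ∃ n ≤ n₀ + N, W (play B P n) := by
  choose B hB hforce using exists_best_edge W
  refine ⟨B, hB, fun P N => ?_⟩
  induction N using Nat.strong_induction_on with
  | _ N ih =>
    intro n₀ hN
    obtain hW | ⟨m, hm, next⟩ := hforce _ N hN
    · exact ⟨n₀, Nat.le_add_right _ _, hW⟩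
    · obtain ⟨n, hn, hW⟩ := ih m hm (n₀ + 1) (next (P (play B P n₀) (B (play B P n₀))))
      exact ⟨n, by omega, hW⟩

/-- The history `h` contains a monochromatic copy of `G`. -/
def HasMonoCopy {V : Type*} (G : SimpleGraph V) (h : History q) : Prop :=
  ∃ i, containsCopy G (colourGraph h i)

lemma onlineRamsey_le_of_canForce {V : Type*} {G : SimpleGraph V}
    (hn : CanForce (HasMonoCopy (q := q) G) n []) : onlineRamsey q G ≤ n := by
  obtain ⟨B, hB, hplay⟩ := exists_validBuilder_of_canForce (HasMonoCopy (q := q) G)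
  exact Nat.sInf_le ⟨B, hB, fun P => zero_add n ▸ hplay P n 0 hn⟩

/-- The history `h` extended by the edges of `E`, coloured by `c`. -/
noncomputable def expose (h : History q) (E : Finset (Sym2 ℕ)) (c : Sym2 ℕ → Fin q) : History q :=
  h ++ E.toList.map fun e => (e, c e)

section Expose

variable {E : Finset (Sym2 ℕ)} {c : Sym2 ℕ → Fin q} {e : Sym2 ℕ}

lemma subset_expose : h ⊆ expose h E c :=
  List.subset_append_left _ _

lemma mem_expose (he : e ∈ E) : (e, c e) ∈ expose h E c :=
  List.mem_append_right _ (List.mem_map_of_mem (mem_toList.2 he))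

lemma mem_map_fst_expose : e ∈ (expose h E c).map Prod.fst ↔ e ∈ h.map Prod.fst ∨ e ∈ E := by
  simp [expose]

end Expose

lemma CanForce.of_forall_append [NeZero q] {L : List (Sym2 ℕ)} (hL : L.Nodup)
    (hnew : ∀ e ∈ L, ¬ e.IsDiag ∧ e ∉ h.map Prod.fst)
    (H : ∀ c : Sym2 ℕ → Fin q, CanForce W n (h ++ L.map fun e => (e, c e))) :
    CanForce W (n + L.length) h := by
  induction L generalizing h with
  | nil => simpa using H 0
  | cons e L ih =>
    obtain ⟨heL, hL⟩ := List.nodup_cons.1 hL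
    refine .present e (hnew e List.mem_cons_self) fun i => ih hL (fun e' he' => ?_) fun c => ?_
    · obtain ⟨hdiag, hmem⟩ := hnew e' (List.mem_cons_of_mem _ he')
      have hne : e' ≠ e := fun hee => heL (hee ▸ he')
      refine ⟨hdiag, ?_⟩
      rw [List.map_append, List.mem_append]
      exact not_or.2 ⟨hmem, by simpa using hne⟩
    · classical
      have hmap : L.map (fun e' => (e', Function.update c e i e')) = L.map fun e' => (e', c e') :=
        List.map_congr_left fun e' he' => by
          rw [Function.update_of_ne (by rintro rfl; exact heL he')]
      have := H (Function.update c e i)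
      rwa [List.map_cons, hmap, Function.update_self, ← List.singleton_append,
        ← List.append_assoc] at this

lemma CanForce.of_forall_expose [NeZero q] {E : Finset (Sym2 ℕ)}
    (hnew : ∀ e ∈ E, ¬ e.IsDiag ∧ e ∉ h.map Prod.fst)
    (H : ∀ c, CanForce W n (expose h E c)) : CanForce W (n + #E) h := by
  rw [← length_toList]
  exact .of_forall_append E.nodup_toList (by simpa using hnew) H

end Game

section BuilderStrategy

variable {q : ℕ} {W : History q → Prop} {h : History q} {S : Finset ℕ} {k : Fin q → ℕ} {x : ℕ}
  {c : Sym2 ℕ → Fin q} {j : Fin q}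

/-- No edge inside `S` has been presented, and a clique inside `S` of one of the sizes `k`, in the
corresponding colour, suffices for `W` whenever it appears after the history `h`. -/
structure IsTarget (W : History q → Prop) (h : History q) (S : Finset ℕ) (k : Fin q → ℕ) :
    Prop where
  notMem : ∀ u ∈ S, ∀ v ∈ S, u ≠ v → s(u, v) ∉ h.map Prod.fst
  win : ∀ h', h ⊆ h' → ∀ i, ∀ A ⊆ S, #A = k i →
    (A : Set ℕ).Pairwise (fun u v => (s(u, v), i) ∈ h') → W h'

lemma isTarget_top {t : ℕ} (S : Finset ℕ) :
    IsTarget (HasMonoCopy (q := q) (⊤ : SimpleGraph (Fin t))) [] S fun _ => t where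
  notMem := by simp
  win h' _ i A _ hcard hclique := by
    let φ := A.orderEmbOfFin hcard
    refine ⟨i, φ, φ.injective, fun u v huv => ?_⟩
    have hne : φ u ≠ φ v := φ.injective.ne huv.ne
    exact (SimpleGraph.fromEdgeSet_adj _).2
      ⟨hclique (A.orderEmbOfFin_mem hcard u) (A.orderEmbOfFin_mem hcard v) hne, hne⟩

/-- The edges joining `x` to the other vertices of `S`. -/
def starEdges (x : ℕ) (S : Finset ℕ) : Finset (Sym2 ℕ) := (S.erase x).image fun y => s(x, y)

lemma mem_starEdges {e : Sym2 ℕ} : e ∈ starEdges x S ↔ ∃ y ∈ S, y ≠ x ∧ s(x, y) = e := by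
  simp only [starEdges, mem_image, mem_erase]
  grind

namespace IsTarget

lemma win_of_le_one (hT : IsTarget W h S k) (hS : S.Nonempty) {i : Fin q} (hi : k i ≤ 1) :
    W h := by
  obtain ⟨A, hA, hcard⟩ := exists_subset_card_eq (hi.trans hS.card_pos)
  refine hT.win h (List.Subset.refl h) i A hA hcard fun u hu v hv huv => ?_
  exact absurd (card_le_one.1 (hcard.trans_le hi) u hu v hv) huv

lemma win_of_hasMonoClique (hT : IsTarget W h S k) (hS : HasMonoClique c S k) :
    W (expose h (S.offDiag.image fun p => s(p.1, p.2)) c) := by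
  obtain ⟨i, A, hA, hcard, hclique⟩ := hS
  refine hT.win _ subset_expose i A hA hcard fun u hu v hv huv => hclique hu hv huv ▸ mem_expose ?_
  exact mem_image.2 ⟨(u, v), mem_offDiag.2 ⟨hA hu, hA hv, huv⟩, rfl⟩

lemma canForce_of_forall_hasMonoClique [NeZero q] (hT : IsTarget W h S k)
    (hS : ∀ c, HasMonoClique c S k) : CanForce W ((#S).choose 2) h := by
  rw [← Sym2.card_image_offDiag, ← zero_add (#_)]
  refine .of_forall_expose (fun e he => ?_) fun c => .of_win (hT.win_of_hasMonoClique (hS c))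
  obtain ⟨⟨u, v⟩, huv, rfl⟩ := mem_image.1 he
  obtain ⟨hu, hv, hne⟩ := mem_offDiag.1 huv
  exact ⟨hne, hT.notMem u hu v hv hne⟩

lemma of_star (hT : IsTarget W h S k) (hx : x ∈ S) (hj : 0 < k j) {S' : Finset ℕ}
    (hS' : S' ⊆ colourNbhd c j x S) :
    IsTarget W (expose h (starEdges x S) c) S' (Function.update k j (k j - 1)) := by
  have hmem (y : ℕ) (hy : y ∈ S') : y ∈ S ∧ y ≠ x ∧ c s(x, y) = j := mem_filter.1 (hS' hy)
  have hsub : S' ⊆ S := fun y hy => (hmem y hy).1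
  refine ⟨fun u hu v hv huv huv' => ?_, fun h' hh' i A hA hcard hclique => ?_⟩
  · obtain hold | hnew := mem_map_fst_expose.1 huv'
    · exact hT.notMem u (hsub hu) v (hsub hv) huv hold
    · obtain ⟨y, -, -, hy⟩ := mem_starEdges.1 hnew
      have := (hmem u hu).2.1
      have := (hmem v hv).2.1
      grind
  · have hhh' : h ⊆ h' := List.Subset.trans subset_expose hh'
    obtain rfl | hij := eq_or_ne i j
    · rw [Function.update_self] at hcard
      have hxA : x ∉ A := fun hxA => (hmem x (hA hxA)).2.1 rfl
      refine hT.win h' hhh' i (insert x A) (insert_subset hx (hA.trans hsub)) ?_ ?_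
      · rw [card_insert_of_notMem hxA, hcard]
        omega
      · rw [coe_insert, Set.pairwise_insert_of_notMem (mem_coe.not.2 hxA)]
        refine ⟨hclique, fun y hy => ?_⟩
        obtain ⟨hyS, hyx, rfl⟩ := hmem y (hA hy)
        have hxy := hh' (mem_expose (mem_starEdges.2 ⟨y, hyS, hyx, rfl⟩))
        exact ⟨hxy, Sym2.eq_swap ▸ hxy⟩
    · rw [Function.update_of_ne hij] at hcard
      exact hT.win h' hhh' i A (hA.trans hsub) hcard hclique

lemma canForce_star [NeZero q] (hT : IsTarget W h S k) (hx : x ∈ S) {n : ℕ}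
    (H : ∀ c, CanForce W n (expose h (starEdges x S) c)) : CanForce W (n + #S) h := by
  have hcard : #(starEdges x S) ≤ #S := card_image_le.trans (card_le_card (erase_subset x S))
  refine (CanForce.of_forall_expose (fun e he => ?_) H).mono (Nat.add_le_add_left hcard n)
  obtain ⟨y, hy, hyx, rfl⟩ := mem_starEdges.1 he
  exact ⟨hyx.symm, hT.notMem x hx y hy hyx.symm⟩

end IsTarget

lemma exists_mul_le_card_colourNbhd (hq : 2 ≤ q) (c : Sym2 ℕ → Fin q) (x : ℕ) {N : ℕ}
    (hS : #S = q * N) : ∃ j, N ≤ #(colourNbhd c j x S) := by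
  have : NeZero q := ⟨by omega⟩
  have hq2 : (2 : ℝ) ≤ q := Nat.ofNat_le_cast.2 hq
  obtain ⟨j, hj⟩ := exists_le_card_colourNbhd c x S (a := fun _ => (N : ℝ) - 1 / 2) <| by
    simp only [sum_const, card_univ, Fintype.card_fin, nsmul_eq_mul, hS, Nat.cast_mul]
    linarith
  refine ⟨j, Nat.lt_add_one_iff.1 ?_⟩
  have : (N : ℝ) < #(colourNbhd c j x S) + 1 := by linarith
  exact_mod_cast this

/-- Each star multiplies the number of vertices by at least `1 / q`, and the cost of the stars is a
geometric series. -/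
theorem IsTarget.canForce_of_forall (hq : 2 ≤ q) {R m n : ℕ} (hR : 0 < R)
    (H : ∀ (h : History q) (S : Finset ℕ) (k : Fin q → ℕ),
      IsTarget W h S k → #S = R → ∑ i, k i = m → CanForce W n h)
    {s : ℕ} (hT : IsTarget W h S k) (hS : #S = q ^ s * R) (hk : ∑ i, k i = m + s) :
    CanForce W (n + q ^ (s + 1) * R) h := by
  have : NeZero q := ⟨by omega⟩
  induction s generalizing h S k with
  | zero => exact (H h S k hT (by simpa using hS) hk).mono (Nat.le_add_right _ _)
  | succ s ih =>
    have hSne : S.Nonempty := card_pos.1 (hS ▸ by positivity)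
    by_cases! hle : ∃ i, k i ≤ 1
    · obtain ⟨i, hi⟩ := hle
      exact .of_win (hT.win_of_le_one hSne hi)
    obtain ⟨x, hx⟩ := hSne
    have hcost : n + q ^ (s + 1) * R + #S ≤ n + q ^ (s + 1 + 1) * R := by
      have := Nat.mul_le_mul_right (q ^ (s + 1) * R) hq
      rw [hS, pow_succ' q (s + 1), mul_assoc q]
      omega
    refine .mono hcost <| hT.canForce_star hx fun c => ?_
    obtain ⟨j, hj⟩ := exists_mul_le_card_colourNbhd hq c x (hS.trans (by rw [pow_succ', mul_assoc]))
    obtain ⟨S', hS', hcard⟩ := exists_subset_card_eq hj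
    have hkj : 0 < k j := zero_lt_one.trans (hle j)
    refine ih (hT.of_star hx hkj hS') hcard ?_
    have := sum_update_sub (m := 1) hkj
    omega

lemma onlineRamsey_le_add_pow_mul (hq : 2 ≤ q) {t R m n s : ℕ} (hR : 0 < R) (hs : q * t = m + s)
    (H : ∀ (h : History q) (S : Finset ℕ) (k : Fin q → ℕ),
      IsTarget (HasMonoCopy (⊤ : SimpleGraph (Fin t))) h S k → #S = R → ∑ i, k i = m →
        CanForce (HasMonoCopy (⊤ : SimpleGraph (Fin t))) n h) :
    onlineRamsey q (⊤ : SimpleGraph (Fin t)) ≤ n + q ^ (s + 1) * R :=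
  onlineRamsey_le_of_canForce <| (isTarget_top (range (q ^ s * R))).canForce_of_forall hq hR H
    (card_range _) (by simpa using hs)

lemma onlineRamsey_top_le_pow (hq : 2 ≤ q) (t : ℕ) :
    onlineRamsey q (⊤ : SimpleGraph (Fin (t + 1))) ≤ q ^ (q * t) := by
  obtain rfl | ht := t.eq_zero_or_pos
  · refine (onlineRamsey_le_of_canForce (.of_win ?_)).trans (Nat.zero_le _)
    exact (isTarget_top {0}).win_of_le_one (singleton_nonempty 0) (i := ⟨0, by omega⟩) le_rfl
  · have hs : q * t - 1 + 1 = q * t := Nat.sub_add_cancel (Nat.mul_pos (by omega) ht)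
    refine (onlineRamsey_le_add_pow_mul (n := 0) (m := q + 1) (s := q * t - 1) hq one_pos
      (by rw [mul_add_one, ← hs]; omega) fun h S k hT hS hk => .of_win ?_).trans_eq ?_
    · obtain ⟨i, -, hi⟩ : ∃ i ∈ univ, k i < 2 := exists_lt_of_sum_lt <| by
        rw [hk, sum_const, card_univ, Fintype.card_fin, smul_eq_mul]
        omega
      exact hT.win_of_le_one (card_pos.1 (hS ▸ one_pos)) (Nat.lt_succ_iff.1 hi)
    · rw [hs, zero_add, mul_one]

lemma onlineRamsey_le_choose_add_pow_mul (hq : 2 ≤ q) {t R m s : ℕ} (hR : 0 < R)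
    (hs : q * t = m + s)
    (H : ∀ (c : Sym2 ℕ → Fin q) (S : Finset ℕ) (k : Fin q → ℕ), #S = R → ∑ i, k i = m →
      HasMonoClique c S k) :
    onlineRamsey q (⊤ : SimpleGraph (Fin t)) ≤ R.choose 2 + q ^ (s + 1) * R :=
  have : NeZero q := ⟨by omega⟩
  onlineRamsey_le_add_pow_mul hq hR hs fun _ S k hT hS hk =>
    hS ▸ hT.canForce_of_forall_hasMonoClique fun c => H c S k hS hk

end BuilderStrategy

section OnlineImprovement

variable {q : ℕ}

lemma natCast_pow_eq_exp (hq : 0 < q) (n : ℕ) : (q : ℝ) ^ n = Real.exp (n * Real.log q) := by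
  rw [Real.exp_nat_mul, Real.exp_log (Nat.cast_pos.2 hq)]

lemma choose_two_add_pow_mul_le {δ X T : ℝ} {s : ℕ} (hq : 0 < q) (hδ0 : 0 ≤ δ) (hδ1 : δ ≤ 1)
    (hXT : T ≤ 4 * X) (hTX : 2 * X ≤ T) (hX : 0 ≤ X) (hs : s * Real.log q = T - X) :
    ((⌈Real.exp ((1 - δ) * X)⌉₊.choose 2 + q ^ (s + 1) * ⌈Real.exp ((1 - δ) * X)⌉₊ : ℕ) : ℝ) ≤
      (2 + 2 * q) * Real.exp ((1 - δ / 4) * T) := by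
  set R := ⌈Real.exp ((1 - δ) * X)⌉₊
  have hδX : δ * T ≤ δ * (4 * X) := by gcongr
  have hR : (R : ℝ) ≤ 2 * Real.exp ((1 - δ) * X) := by
    have := Nat.ceil_lt_add_one (Real.exp_pos ((1 - δ) * X)).le
    have := Real.one_le_exp (mul_nonneg (sub_nonneg.2 hδ1) hX)
    linarith
  have hclique : (R.choose 2 : ℝ) ≤ 2 * Real.exp ((1 - δ / 4) * T) :=
    calc (R.choose 2 : ℝ) ≤ R ^ 2 / 2 := by simpa using Nat.choose_le_pow_div (α := ℝ) 2 R
      _ ≤ (2 * Real.exp ((1 - δ) * X)) ^ 2 / 2 := by gcongr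
      _ = 2 * Real.exp (2 * ((1 - δ) * X)) := by
        rw [mul_pow, ← Real.exp_nat_mul]
        norm_num
        ring
      _ ≤ 2 * Real.exp ((1 - δ / 4) * T) := by
        have := mul_nonneg hδ0 hX
        gcongr ?_ * Real.exp ?_
        linarith
  have hstars : (q ^ (s + 1) * R : ℝ) ≤ 2 * q * Real.exp ((1 - δ / 4) * T) :=
    calc (q ^ (s + 1) * R : ℝ) ≤ q ^ (s + 1) * (2 * Real.exp ((1 - δ) * X)) := by gcongr
      _ = 2 * q * Real.exp (T - X + (1 - δ) * X) := by
        rw [pow_succ, natCast_pow_eq_exp hq, hs, Real.exp_add]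
        ring
      _ ≤ 2 * q * Real.exp ((1 - δ / 4) * T) := by
        gcongr
        linarith
  push_cast
  linarith

theorem exists_onlineRamsey_top_le_exp (hq : 2 ≤ q) : ∃ δ : ℝ, 0 < δ ∧ ∀ᶠ t : ℕ in atTop,
    (onlineRamsey q (⊤ : SimpleGraph (Fin t)) : ℝ) ≤
      Real.exp ((1 - δ) * (q * t * Real.log q)) := by
  obtain ⟨δ, hδ0, hδ1, N₀, H⟩ :=
    exists_hasMonoClique_of_exp_le.{0, 0} (Fin q) (by rwa [Fintype.card_fin])
  have hlog : 0 < Real.log q := Real.log_pos (Nat.one_lt_cast.2 hq)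
  have hq0 : (0 : ℝ) < q := by positivity
  have hlarge : ∀ᶠ t : ℕ in atTop, Real.log (2 + 2 * q) ≤ δ / 8 * (q * t * Real.log q) :=
    (((tendsto_natCast_atTop_atTop.const_mul_atTop hq0).atTop_mul_const hlog).const_mul_atTop
      (by positivity)).eventually_ge_atTop _
  refine ⟨δ / 8, by positivity, ?_⟩
  filter_upwards [hlarge, eventually_ge_atTop (2 * N₀ + 2)] with t ht htN
  set m := q * (t / 2) with hm
  have hN₀ : N₀ ≤ m := by nlinarith [(by omega : N₀ ≤ t / 2)]
  have hmt : 2 * m ≤ q * t := by nlinarith [(by omega : 2 * (t / 2) ≤ t)]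
  have htm : q * t ≤ 4 * m := by nlinarith [(by omega : t ≤ 4 * (t / 2))]
  have hs : q * t = m + (q * t - m) := by omega
  have hbound := onlineRamsey_le_choose_add_pow_mul hq
    (R := ⌈Real.exp ((1 - δ) * (m * Real.log q))⌉₊) (Nat.ceil_pos.2 (Real.exp_pos _)) hs
    fun c S k hS hk =>
      H c (hk ▸ hN₀) (by rw [hk, hS, Fintype.card_fin]; exact Nat.le_ceil _)
  calc (onlineRamsey q (⊤ : SimpleGraph (Fin t)) : ℝ)
      ≤ (2 + 2 * q) * Real.exp ((1 - δ / 4) * (q * t * Real.log q)) := by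
        refine (Nat.cast_le.2 hbound).trans <| choose_two_add_pow_mul_le (by omega) hδ0.le hδ1
          ?_ ?_ (by positivity) ?_
        · have : (q * t : ℝ) ≤ 4 * m := mod_cast htm
          nlinarith
        · have : (2 * m : ℝ) ≤ q * t := mod_cast hmt
          nlinarith
        · have : (q * t : ℝ) = m + (q * t - m : ℕ) := mod_cast hs
          linear_combination Real.log q * (-this)
    _ ≤ Real.exp ((1 - δ / 8) * (q * t * Real.log q)) := by
        rw [← Real.exp_log (by positivity : (0 : ℝ) < 2 + 2 * q), ← Real.exp_add]
        gcongr
        linarith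

/-- `c` is so small that `⌈c * t⌉ = 1` until the exponential improvement is available; up to then
`q ^ (q * (t - 1))` rounds suffice. -/
theorem exists_onlineRamsey_top_mul_pow_le (hq : 2 ≤ q) : ∃ c : ℝ, 0 < c ∧ ∀ t : ℕ, 0 < t →
    (onlineRamsey q (⊤ : SimpleGraph (Fin t)) : ℝ) * q ^ (q * ⌈c * t⌉₊) ≤ q ^ (q * t) := by
  obtain ⟨δ, hδ, hlarge⟩ := exists_onlineRamsey_top_le_exp hq
  obtain ⟨T₀, hT₀⟩ := eventually_atTop.1 hlarge
  set c := min (1 / (T₀ + 1 : ℝ)) (δ / 2)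
  have hc : 0 < c := lt_min (by positivity) (by positivity)
  refine ⟨c, hc, fun t ht => ?_⟩
  have hlog : 0 < Real.log q := Real.log_pos (Nat.one_lt_cast.2 hq)
  obtain hct | hct := le_or_gt (c * t) 1
  · obtain ⟨t, rfl⟩ := Nat.exists_eq_add_one_of_ne_zero ht.ne'
    have hceil : ⌈c * (t + 1 : ℕ)⌉₊ = 1 :=
      le_antisymm (Nat.ceil_le.2 (by simpa using hct)) (Nat.ceil_pos.2 (by positivity))
    rw [hceil, mul_add_one q t, pow_add, mul_one]
    gcongr
    exact_mod_cast onlineRamsey_top_le_pow hq t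
  · have hT₀t : T₀ ≤ t := by
      have : 1 < t / (T₀ + 1 : ℝ) := by
        rw [div_eq_mul_one_div, mul_comm]
        exact hct.trans_le (by gcongr; exact min_le_left _ _)
      rw [one_lt_div (by positivity)] at this
      exact_mod_cast (by linarith : (T₀ : ℝ) ≤ t)
    have hceil : (⌈c * t⌉₊ : ℝ) ≤ δ * t := by
      have := Nat.ceil_lt_add_one (zero_le_one.trans hct.le)
      have : c * t ≤ δ / 2 * t := by gcongr; exact min_le_right _ _
      linarith
    rw [natCast_pow_eq_exp (by omega), natCast_pow_eq_exp (by omega)]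
    calc _ ≤ Real.exp ((1 - δ) * (q * t * Real.log q)) *
          Real.exp ((q * ⌈c * t⌉₊ : ℕ) * Real.log q) := by
          gcongr
          exact hT₀ t hT₀t
      _ ≤ Real.exp ((q * t : ℕ) * Real.log q) := by
          rw [← Real.exp_add, Real.exp_le_exp]
          have : q * Real.log q * ⌈c * t⌉₊ ≤ q * Real.log q * (δ * t) := by gcongr
          push_cast
          linarith

lemma one_le_ramseyQ_const (hq : 2 ≤ q) {m : ℕ} (hm : 0 < m) :
    1 ≤ ramseyQ fun _ : Fin q => m := by
  set s := {n : ℕ | ∀ c : Sym2 (Fin n) → Fin q, ∃ i, monoClique c i m}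
  have hne : s.Nonempty := by
    refine ⟨⌈2 * Real.exp ((∑ _i : Fin q, m : ℕ) * Real.log q)⌉₊, fun c => ?_⟩
    obtain ⟨i, A, -, hcard, hclique⟩ := hasMonoClique_of_exp_le (c := c) (S := univ)
      (k := fun _ => m) (by rwa [Fintype.card_fin]) (by simpa using Nat.le_ceil _)
    exact ⟨i, A, hcard, fun u hu v hv => hclique hu hv⟩
  refine Nat.one_le_iff_ne_zero.2 fun h0 => ?_
  have h0s : 0 ∈ s := h0 ▸ Nat.sInf_mem hne
  obtain ⟨-, A, hcard, -⟩ := h0s fun _ => ⟨0, by omega⟩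
  rw [A.eq_empty_of_isEmpty, card_empty] at hcard
  exact hm.ne hcard

end OnlineImprovement

end OnlineRamsey

theorem online_ramsey_q_from_ramsey_bound_general (q : ℕ) (hq : 2 ≤ q) (f : ℕ → ℝ)
    (hf : ∀ m : ℕ, 0 < m → (ramseyQ (fun _ : Fin q => m) : ℝ) ≤ f m * (q : ℝ) ^ (q * m)) :
    ∃ c : ℝ, 0 < c ∧ ∀ t : ℕ, 0 < t →
      (onlineRamsey q (⊤ : SimpleGraph (Fin t)) : ℝ) ≤
        f ⌈c * t⌉₊ * (q : ℝ) ^ (q * t) := by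
  obtain ⟨c, hc, H⟩ := OnlineRamsey.exists_onlineRamsey_top_mul_pow_le hq
  refine ⟨c, hc, fun t ht => ?_⟩
  set m := ⌈c * t⌉₊
  have hm : 0 < m := Nat.ceil_pos.2 (by positivity)
  have hfm : 1 ≤ f m * (q : ℝ) ^ (q * m) :=
    (Nat.one_le_cast.2 (OnlineRamsey.one_le_ramseyQ_const hq hm)).trans (hf m hm)
  have hf0 : 0 ≤ f m := nonneg_of_mul_nonneg_left (zero_le_one.trans hfm) (by positivity)
  calc (onlineRamsey q (⊤ : SimpleGraph (Fin t)) : ℝ)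
      ≤ onlineRamsey q (⊤ : SimpleGraph (Fin t)) * (f m * (q : ℝ) ^ (q * m)) :=
        le_mul_of_one_le_right (Nat.cast_nonneg _) hfm
    _ = f m * (onlineRamsey q (⊤ : SimpleGraph (Fin t)) * (q : ℝ) ^ (q * m)) := mul_left_comm _ _ _
    _ ≤ f m * (q : ℝ) ^ (q * t) := by
        gcongr
        exact H t ht

/-- If `r(k₁, …, k_q) ≤ f(k₁) q^{k₁ + ⋯ + k_q}` whenever `k₁ ≥ ⋯ ≥ k_q ≥ k₁/2`, then there
is a constant `c > 0` with `r̃_q(t) ≤ f(⌈ct⌉) q^{qt}` for all positive `t`. -/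
theorem online_ramsey_q_from_ramsey_bound (q : ℕ) (hq : 2 ≤ q) (f : ℕ → ℝ)
    (hf0 : ∀ n, 0 ≤ f n)
    (hf : ∀ k : Fin q → ℕ, (∀ i, 0 < k i) → Antitone k →
      (∀ i, k ⟨0, by omega⟩ ≤ 2 * k i) →
      (ramseyQ k : ℝ) ≤ f (k ⟨0, by omega⟩) * (q : ℝ) ^ (∑ i, k i)) :
    ∃ c : ℝ, 0 < c ∧ ∀ t : ℕ, 0 < t →
      (onlineRamsey q (⊤ : SimpleGraph (Fin t)) : ℝ) ≤
        f ⌈c * t⌉₊ * (q : ℝ) ^ (q * t) :=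
  online_ramsey_q_from_ramsey_bound_general q hq f fun m hm => by
    simpa using hf (fun _ => m) (fun _ => hm) antitone_const fun _ => by omega
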